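/- arXiv:2203.12801 — 2 statements merged into one kernel-verified Lean document; each statement's English description precedes it below -/
import Mathlib

section
/- Suppose n ≥ 2 is an integer and q is a prime power, with n + q → ∞. Let X be the random subset of F_q^n in which each point is included independently with probability θ. Then, for any integer ℓ satisfying 3 ≤ ℓ ≤ q and ℓ = O(n ln q), the event Γ that there exists an ℓ-rich line with respect to X has threshold function (q^{2n−2}·C(q,ℓ))^{−1/ℓ}, where C(q,ℓ) is the binomial coefficient. -/
open Filter Asymptotics

noncomputable def prRandomSubset {α : Type*} (U : Finset α) (θ : ℝ)
    (E : Finset α → Prop) : ℝ :=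
  ∑ A ∈ U.powerset,
    @ite ℝ (E A) (Classical.propDecidable _)
      (θ ^ A.card * (1 - θ) ^ (U.card - A.card)) 0

def IsFlat (K : Type*) {V : Type*} [Field K] [AddCommGroup V] [Module K V]
    (m : ℕ) (S : Set V) : Prop :=
  ∃ W : Submodule K V, Module.finrank K W = m ∧ ∃ v : V, S = (v + ·) '' (W : Set V)

def ExistsRichFlat (K : Type*) {V : Type*} [Field K] [AddCommGroup V] [Module K V]
    (m ℓ : ℕ) (A : Finset V) : Prop :=
  ∃ S : Set V, IsFlat K m S ∧ ℓ ≤ (S ∩ (A : Set V)).ncard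

section RandomSubset

variable {α : Type*}

/-- Expectation of `g A` when `A` is a random subset of `U` with density `θ`. -/
noncomputable def randomSubsetExp (θ : ℝ) (U : Finset α) (g : Finset α → ℝ) : ℝ :=
  ∑ A ∈ U.powerset, θ ^ A.card * (1 - θ) ^ (U.card - A.card) * g A

/-- The probability that a binomial variable with parameters `q`, `θ` is at least `ℓ`. -/
noncomputable def binomTail (θ : ℝ) (q ℓ : ℕ) : ℝ :=
  ∑ k ∈ Finset.range (q + 1),
    (q.choose k : ℝ) * (θ ^ k * (1 - θ) ^ (q - k) * if ℓ ≤ k then 1 else 0)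

lemma prRandomSubset_eq_exp (U : Finset α) (θ : ℝ) (E : Finset α → Prop)
    [DecidablePred E] :
    prRandomSubset U θ E = randomSubsetExp θ U fun A => if E A then 1 else 0 := by
  unfold prRandomSubset randomSubsetExp
  refine Finset.sum_congr rfl fun A _ => ?_
  by_cases h : E A <;> simp [h]

namespace randomSubsetExp

lemma congr {θ : ℝ} {U : Finset α} {f g : Finset α → ℝ} (h : ∀ A ⊆ U, f A = g A) :
    randomSubsetExp θ U f = randomSubsetExp θ U g :=
  Finset.sum_congr rfl fun A hA => by rw [h A (Finset.mem_powerset.1 hA)]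

lemma mono {θ : ℝ} (h0 : 0 ≤ θ) (h1 : θ ≤ 1) {U : Finset α} {f g : Finset α → ℝ}
    (h : ∀ A ⊆ U, f A ≤ g A) : randomSubsetExp θ U f ≤ randomSubsetExp θ U g :=
  Finset.sum_le_sum fun A hA => mul_le_mul_of_nonneg_left (h A (Finset.mem_powerset.1 hA))
    (mul_nonneg (pow_nonneg h0 _) (pow_nonneg (sub_nonneg.2 h1) _))

lemma const (θ : ℝ) (U : Finset α) (c : ℝ) : randomSubsetExp θ U (fun _ => c) = c := by
  unfold randomSubsetExp
  rw [← Finset.sum_mul, Finset.sum_pow_mul_eq_add_pow]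
  simp

lemma sum {ι : Type*} (θ : ℝ) (U : Finset α) (s : Finset ι) (f : ι → Finset α → ℝ) :
    randomSubsetExp θ U (fun A => ∑ i ∈ s, f i A) = ∑ i ∈ s, randomSubsetExp θ U (f i) := by
  unfold randomSubsetExp
  rw [Finset.sum_comm]
  exact Finset.sum_congr rfl fun A _ => Finset.mul_sum ..

lemma add (θ : ℝ) (U : Finset α) (f g : Finset α → ℝ) :
    randomSubsetExp θ U (fun A => f A + g A) =
      randomSubsetExp θ U f + randomSubsetExp θ U g := by
  simp only [randomSubsetExp, mul_add, Finset.sum_add_distrib]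

lemma mul_left (θ : ℝ) (U : Finset α) (c : ℝ) (f : Finset α → ℝ) :
    randomSubsetExp θ U (fun A => c * f A) = c * randomSubsetExp θ U f := by
  simp only [randomSubsetExp, Finset.mul_sum]
  exact Finset.sum_congr rfl fun A _ => by ring

lemma sub (θ : ℝ) (U : Finset α) (f g : Finset α → ℝ) :
    randomSubsetExp θ U (fun A => f A - g A) =
      randomSubsetExp θ U f - randomSubsetExp θ U g := by
  simp only [randomSubsetExp, mul_sub, Finset.sum_sub_distrib]

lemma apply_card (θ : ℝ) (U : Finset α) (f : ℕ → ℝ) :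
    randomSubsetExp θ U (fun A => f A.card) =
      ∑ k ∈ Finset.range (U.card + 1),
        (U.card.choose k : ℝ) * (θ ^ k * (1 - θ) ^ (U.card - k) * f k) := by
  unfold randomSubsetExp
  rw [Finset.sum_powerset_apply_card
    (fun k => θ ^ k * (1 - θ) ^ (U.card - k) * f k)]
  simp

lemma card_ge (θ : ℝ) (U : Finset α) (ℓ : ℕ) :
    randomSubsetExp θ U (fun A => if ℓ ≤ A.card then 1 else 0) = binomTail θ U.card ℓ :=
  apply_card θ U fun k => if ℓ ≤ k then 1 else 0

lemma card_eq (θ : ℝ) (U : Finset α) (ℓ : ℕ) (h : ℓ ≤ U.card) :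
    randomSubsetExp θ U (fun A => if A.card = ℓ then 1 else 0) =
      (U.card.choose ℓ : ℝ) * (θ ^ ℓ * (1 - θ) ^ (U.card - ℓ)) := by
  rw [apply_card θ U fun k => if k = ℓ then 1 else 0]
  simp [Nat.lt_succ_of_le h]

variable [DecidableEq α]

lemma insert (θ : ℝ) {a : α} {U : Finset α} (ha : a ∉ U) (g : Finset α → ℝ) :
    randomSubsetExp θ (insert a U) g =
      (1 - θ) * randomSubsetExp θ U g + θ * randomSubsetExp θ U fun A => g (insert a A) := by
  unfold randomSubsetExp
  rw [Finset.sum_powerset_insert ha, Finset.mul_sum, Finset.mul_sum]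
  congr 1
  · refine Finset.sum_congr rfl fun A hA => ?_
    have hc := Finset.card_le_card (Finset.mem_powerset.1 hA)
    rw [Finset.card_insert_of_notMem ha, Nat.succ_sub hc, pow_succ]
    ring
  · refine Finset.sum_congr rfl fun A hA => ?_
    rw [Finset.card_insert_of_notMem ha,
      Finset.card_insert_of_notMem fun h => ha (Finset.mem_powerset.1 hA h),
      Nat.succ_sub_succ, pow_succ]
    ring

lemma union (θ : ℝ) {S T : Finset α} (hST : Disjoint S T) (g : Finset α → ℝ) :
    randomSubsetExp θ (S ∪ T) g =
      randomSubsetExp θ S fun A => randomSubsetExp θ T fun B => g (A ∪ B) := by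
  induction S using Finset.induction_on generalizing g with
  | empty => simp [randomSubsetExp]
  | insert a S ha ih =>
    rw [Finset.disjoint_insert_left] at hST
    rw [Finset.insert_union, insert θ (by simp [ha, hST.1]), insert θ ha, ih hST.2, ih hST.2]
    simp only [Finset.insert_union]

lemma inter (θ : ℝ) {S U : Finset α} (h : S ⊆ U) (g : Finset α → ℝ) :
    randomSubsetExp θ U (fun A => g (A ∩ S)) = randomSubsetExp θ S g := by
  conv_lhs => rw [← Finset.union_sdiff_of_subset h]
  rw [union θ Finset.disjoint_sdiff]
  refine congr fun A hA => ?_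
  refine (congr (g := fun _ => g A) fun B hB => ?_).trans (const _ _ _)
  congr 1
  grind

lemma mul_of_disjoint (θ : ℝ) {S T U : Finset α} (hS : S ⊆ U) (hT : T ⊆ U)
    (hST : Disjoint S T) (f g : Finset α → ℝ) :
    randomSubsetExp θ U (fun A => f (A ∩ S) * g (A ∩ T)) =
      randomSubsetExp θ S f * randomSubsetExp θ T g := by
  have key := inter θ (Finset.union_subset hS hT) fun A => f (A ∩ S) * g (A ∩ T)
  have e : ∀ A : Finset α, f (A ∩ (S ∪ T) ∩ S) * g (A ∩ (S ∪ T) ∩ T) =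
      f (A ∩ S) * g (A ∩ T) := fun A => by
    congr 2 <;> grind
  simp only [e] at key
  rw [key, union θ hST, mul_comm (randomSubsetExp θ S f), ← mul_left]
  refine congr fun A hA => ?_
  rw [mul_comm _ (f A), ← mul_left]
  refine congr fun B hB => ?_
  have h1 : (A ∪ B) ∩ S = A := by
    have := Finset.disjoint_left.1 hST
    grind
  have h2 : (A ∪ B) ∩ T = B := by
    have := Finset.disjoint_left.1 hST
    grind
  rw [h1, h2]

lemma inter_card_ge (θ : ℝ) {S U : Finset α} (h : S ⊆ U) (ℓ : ℕ) :
    randomSubsetExp θ U (fun A => if ℓ ≤ (A ∩ S).card then 1 else 0) =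
      binomTail θ S.card ℓ := by
  rw [inter θ h fun A => if ℓ ≤ A.card then 1 else 0, card_ge]

lemma superset (θ : ℝ) {S U : Finset α} (h : S ⊆ U) :
    randomSubsetExp θ U (fun A => if S ⊆ A then 1 else 0) = θ ^ S.card := by
  have e : ∀ A : Finset α, S ⊆ A ↔ S ⊆ A ∩ S := by grind
  rw [congr (g := fun A => if S ⊆ A ∩ S then 1 else 0) fun A _ => if_congr (e A) rfl rfl]
  rw [inter θ h fun A => if S ⊆ A then 1 else 0]
  unfold randomSubsetExp
  rw [Finset.sum_eq_single S]
  · simp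
  · intro A hA hne
    have hs : ¬ S ⊆ A := fun hs => hne (Finset.Subset.antisymm (Finset.mem_powerset.1 hA) hs)
    simp [hs]
  · simp

end randomSubsetExp

lemma binomTail_le {θ : ℝ} (h0 : 0 ≤ θ) (h1 : θ ≤ 1) (q ℓ : ℕ) :
    binomTail θ q ℓ ≤ q.choose ℓ * θ ^ ℓ := by
  classical
  have hU := randomSubsetExp.card_ge θ (Finset.range q) ℓ
  rw [Finset.card_range] at hU
  rw [← hU]
  calc randomSubsetExp θ (Finset.range q) (fun A => if ℓ ≤ A.card then 1 else 0)
      ≤ randomSubsetExp θ (Finset.range q) (fun A =>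
          ∑ S ∈ (Finset.range q).powersetCard ℓ, if S ⊆ A then 1 else 0) := by
        refine randomSubsetExp.mono h0 h1 fun A hA => ?_
        split_ifs with h
        · obtain ⟨S, hSA, hS⟩ := Finset.exists_subset_card_eq h
          refine le_trans ?_ (Finset.single_le_sum (f := fun S => if S ⊆ A then (1 : ℝ) else 0)
            (fun _ _ => by positivity) (Finset.mem_powersetCard.2 ⟨hSA.trans hA, hS⟩))
          simp [hSA]
        · exact Finset.sum_nonneg fun _ _ => by positivity
    _ = q.choose ℓ * θ ^ ℓ := by
        rw [randomSubsetExp.sum, Finset.sum_congr rfl (g := fun _ => θ ^ ℓ)]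
        · simp
        · intro S hS
          rw [Finset.mem_powersetCard] at hS
          rw [randomSubsetExp.superset θ hS.1, hS.2]

lemma le_binomTail {θ : ℝ} (h0 : 0 ≤ θ) (h1 : θ ≤ 1) {q ℓ : ℕ} (h : ℓ ≤ q) :
    q.choose ℓ * (θ ^ ℓ * (1 - θ) ^ (q - ℓ)) ≤ binomTail θ q ℓ := by
  have hE := randomSubsetExp.card_eq θ (Finset.range q) ℓ (by simpa using h)
  have hT := randomSubsetExp.card_ge θ (Finset.range q) ℓ
  rw [Finset.card_range] at hE hT
  rw [← hE, ← hT]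
  refine randomSubsetExp.mono h0 h1 fun A _ => ?_
  split_ifs <;> first | omega | norm_num

lemma pow_le_binomTail {θ : ℝ} (h0 : 0 ≤ θ) (h1 : θ ≤ 1) {q ℓ : ℕ} (h : ℓ ≤ q) :
    θ ^ ℓ ≤ binomTail θ q ℓ := by
  have hT := randomSubsetExp.card_ge θ (Finset.range q) ℓ
  have hS := randomSubsetExp.superset θ (Finset.range_mono h)
  rw [Finset.card_range] at hT hS
  rw [← hS, ← hT]
  refine randomSubsetExp.mono h0 h1 fun A _ => ?_
  split_ifs with h2 h3
  · rfl
  · exact absurd (by simpa using Finset.card_le_card h2) h3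
  · norm_num
  · rfl

/-- If the mean is at least `2 ℓ ≥ 6`, Chebyshev's inequality bounds the tail from below. -/
lemma third_le_binomTail {θ : ℝ} (h0 : 0 ≤ θ) (h1 : θ ≤ 1) {q ℓ : ℕ} (hℓ : 3 ≤ ℓ)
    (h : 2 * (ℓ : ℝ) ≤ θ * q) : 1 / 3 ≤ binomTail θ q ℓ := by
  have hvar : ∑ k ∈ Finset.range (q + 1),
      (q.choose k : ℝ) * (θ ^ k * (1 - θ) ^ (q - k) * (q * θ - k) ^ 2) = q * θ * (1 - θ) := by
    have := congrArg (Polynomial.eval θ) (bernsteinPolynomial.variance ℝ q)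
    simp only [Polynomial.eval_finsetSum, bernsteinPolynomial, Polynomial.eval_mul,
      Polynomial.eval_pow, Polynomial.eval_sub, Polynomial.eval_natCast, Polynomial.eval_X,
      Polynomial.eval_one, nsmul_eq_mul] at this
    rw [← this]
    exact Finset.sum_congr rfl fun k _ => by ring
  have hone := randomSubsetExp.apply_card θ (Finset.range q) fun _ => 1
  rw [randomSubsetExp.const, Finset.card_range] at hone
  have hℓ' : (3 : ℝ) ≤ ℓ := by exact_mod_cast hℓ
  have key : (1 - binomTail θ q ℓ) * (q * θ / 2) ^ 2 ≤ q * θ * (1 - θ) := by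
    rw [← hvar]
    nth_rw 1 [hone]
    rw [binomTail, ← Finset.sum_sub_distrib, Finset.sum_mul]
    refine Finset.sum_le_sum fun k _ => ?_
    rw [← mul_sub, ← mul_sub, mul_assoc, mul_assoc]
    have : 0 ≤ 1 - θ := by linarith
    gcongr
    split_ifs with hk
    · simp only [sub_self, zero_mul]; positivity
    · have : (k : ℝ) ≤ ℓ := by exact_mod_cast (not_le.1 hk).le
      rw [sub_zero, one_mul]
      gcongr
      linarith
  by_contra! hlt
  nlinarith [mul_nonneg (by linarith : 0 ≤ (q : ℝ) * θ - 6) (by linarith : (0 : ℝ) ≤ q * θ),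
    mul_nonneg (by linarith : 0 ≤ (q : ℝ) * θ) h0,
    mul_pos (sub_pos.2 hlt) (by nlinarith : 0 < ((q : ℝ) * θ) ^ 2)]

/-- Two rich-line indicators on sets meeting in one point have small covariance. -/
lemma randomSubsetExp_mul_le_of_inter_singleton [DecidableEq α] {θ : ℝ} (h0 : 0 < θ) (h1 : θ ≤ 1)
    {U S T : Finset α} {x : α} {q ℓ : ℕ} (hℓ : 1 ≤ ℓ) (hℓq : ℓ ≤ q) (hS : S ⊆ U) (hT : T ⊆ U)
    (hSq : S.card = q) (hTq : T.card = q) (hST : S ∩ T = {x}) :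
    randomSubsetExp θ U (fun A => (if ℓ ≤ (A ∩ S).card then 1 else 0) *
      (if ℓ ≤ (A ∩ T).card then 1 else 0)) ≤
      binomTail θ q ℓ ^ 2 + ℓ ^ 2 / (q ^ 2 * θ) * binomTail θ q ℓ ^ 2 := by
  have hx : x ∈ S ∩ T := by rw [hST]; simp
  obtain ⟨hxS, hxT⟩ := Finset.mem_inter.1 hx
  obtain ⟨k, rfl⟩ : ∃ k, ℓ = k + 1 := ⟨ℓ - 1, by omega⟩
  obtain ⟨r, rfl⟩ : ∃ r, q = r + 1 := ⟨q - 1, by omega⟩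
  have step : ∀ (R : Finset α), x ∈ R → ∀ A ⊆ U.erase x, A ∩ R = A ∩ R.erase x ∧
      (insert x A ∩ R).card = (A ∩ R.erase x).card + 1 := by
    intro R hR A hA
    have hxA : x ∉ A := fun h => by simpa using hA h
    have e : A ∩ R = A ∩ R.erase x := by grind
    refine ⟨e, ?_⟩
    rw [Finset.insert_inter_of_mem hR, Finset.card_insert_of_notMem (by simp [hxA]), e]
  have hdisj : Disjoint (S.erase x) (T.erase x) := by
    rw [Finset.disjoint_left]
    intro y hy hy'
    have : y ∈ S ∩ T := by grind
    rw [hST] at this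
    grind
  have hS' : S.erase x ⊆ U.erase x := Finset.erase_subset_erase x hS
  have hT' : T.erase x ⊆ U.erase x := Finset.erase_subset_erase x hT
  have cS : (S.erase x).card = r := by rw [Finset.card_erase_of_mem hxS, hSq]; rfl
  have cT : (T.erase x).card = r := by rw [Finset.card_erase_of_mem hxT, hTq]; rfl
  have hprod : randomSubsetExp θ U (fun A => (if k + 1 ≤ (A ∩ S).card then 1 else 0) *
      (if k + 1 ≤ (A ∩ T).card then 1 else 0)) =
      (1 - θ) * binomTail θ r (k + 1) ^ 2 + θ * binomTail θ r k ^ 2 := by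
    rw [← Finset.insert_erase (hS hxS), randomSubsetExp.insert θ (Finset.notMem_erase x U)]
    congr 2
    · rw [randomSubsetExp.congr (g := fun A => (if k + 1 ≤ (A ∩ S.erase x).card then 1 else 0) *
        (if k + 1 ≤ (A ∩ T.erase x).card then 1 else 0))
        fun A hA => by rw [(step S hxS A hA).1, (step T hxT A hA).1],
        randomSubsetExp.mul_of_disjoint θ hS' hT' hdisj
          (fun A => if k + 1 ≤ A.card then 1 else 0) (fun A => if k + 1 ≤ A.card then 1 else 0),
        randomSubsetExp.card_ge, randomSubsetExp.card_ge, cS, cT, sq]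
    · rw [randomSubsetExp.congr (g := fun A => (if k ≤ (A ∩ S.erase x).card then 1 else 0) *
        (if k ≤ (A ∩ T.erase x).card then 1 else 0))
        fun A hA => by simp only [(step S hxS A hA).2, (step T hxT A hA).2, Nat.add_le_add_iff_right],
        randomSubsetExp.mul_of_disjoint θ hS' hT' hdisj
          (fun A => if k ≤ A.card then 1 else 0) (fun A => if k ≤ A.card then 1 else 0),
        randomSubsetExp.card_ge, randomSubsetExp.card_ge, cS, cT, sq]
  have hp : binomTail θ (r + 1) (k + 1) =
      (1 - θ) * binomTail θ r (k + 1) + θ * binomTail θ r k := by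
    rw [← hSq, ← randomSubsetExp.inter_card_ge θ hS, ← Finset.insert_erase (hS hxS),
      randomSubsetExp.insert θ (Finset.notMem_erase x U)]
    congr 2
    · rw [randomSubsetExp.congr (g := fun A => if k + 1 ≤ (A ∩ S.erase x).card then 1 else 0)
        fun A hA => by rw [(step S hxS A hA).1], randomSubsetExp.inter_card_ge θ hS', cS]
    · rw [randomSubsetExp.congr (g := fun A => if k ≤ (A ∩ S.erase x).card then 1 else 0)
        fun A hA => by simp only [(step S hxS A hA).2, Nat.add_le_add_iff_right],
        randomSubsetExp.inter_card_ge θ hS', cS]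
  have hdiff : binomTail θ r k - binomTail θ r (k + 1) =
      r.choose k * (θ ^ k * (1 - θ) ^ (r - k)) := by
    rw [← cS, ← randomSubsetExp.card_ge, ← randomSubsetExp.card_ge,
      ← randomSubsetExp.card_eq θ _ k (by omega), ← randomSubsetExp.sub]
    refine randomSubsetExp.congr fun A _ => ?_
    split_ifs <;> first | omega | norm_num
  have hlow := le_binomTail h0.le h1 hℓq
  have hch : ((r + 1 : ℕ) : ℝ) * r.choose k = (r + 1).choose (k + 1) * ((k + 1 : ℕ) : ℝ) := by
    exact_mod_cast Nat.add_one_mul_choose_eq r k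
  rw [Nat.add_sub_add_right] at hlow
  rw [hprod]
  set a := binomTail θ r (k + 1)
  set b := binomTail θ r k
  set p := binomTail θ (r + 1) (k + 1)
  set c := (r.choose k : ℝ) * (θ ^ k * (1 - θ) ^ (r - k))
  have hc0 : 0 ≤ c := by
    have : 0 ≤ 1 - θ := by linarith
    positivity
  have hcp : ((r + 1 : ℕ) : ℝ) * θ * c ≤ ((k + 1 : ℕ) : ℝ) * p := by
    refine le_trans (le_of_eq ?_) (mul_le_mul_of_nonneg_left hlow (Nat.cast_nonneg _))
    simp only [c]
    rw [pow_succ]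
    linear_combination (θ * (θ ^ k * (1 - θ) ^ (r - k))) * hch
  have hcov : (1 - θ) * a ^ 2 + θ * b ^ 2 = p ^ 2 + θ * (1 - θ) * c ^ 2 := by
    rw [hp, ← hdiff]; ring
  rw [hcov]
  have hq0 : (0 : ℝ) < ((r + 1 : ℕ) : ℝ) := by positivity
  have hsq : (((r + 1 : ℕ) : ℝ) * θ * c) ^ 2 ≤ (((k + 1 : ℕ) : ℝ) * p) ^ 2 := by gcongr
  have : θ * c ^ 2 ≤ ((k + 1 : ℕ) : ℝ) ^ 2 / (((r + 1 : ℕ) : ℝ) ^ 2 * θ) * p ^ 2 := by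
    rw [div_mul_eq_mul_div, le_div_iff₀ (by positivity)]
    linarith
  nlinarith [mul_nonneg (mul_nonneg h0.le h0.le) (sq_nonneg c)]

/-- The second moment bound for the number of rich members of a family of `q`-sets
that pairwise meet in at most one point. -/
lemma one_sub_le_prob_exists_rich [DecidableEq α] {ι : Type*} [Fintype ι] [DecidableEq ι]
    {θ : ℝ} (h0 : 0 < θ) (h1 : θ ≤ 1) {U : Finset α} {L : ι → Finset α} {q ℓ N D : ℕ}
    (hℓ : 1 ≤ ℓ) (hℓq : ℓ ≤ q) (hN : Fintype.card ι = N) (hN0 : 0 < N)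
    (hLU : ∀ i, L i ⊆ U) (hLq : ∀ i, (L i).card = q)
    (hL : ∀ i j, i ≠ j → (L i ∩ L j).card ≤ 1)
    (hD : ∀ i, (Finset.univ.filter fun j => i ≠ j ∧ ¬ Disjoint (L i) (L j)).card ≤ D) :
    1 - (1 / (N * binomTail θ q ℓ) + D * (ℓ ^ 2 / (q ^ 2 * θ)) / N) ≤
      randomSubsetExp θ U fun A => if ∃ i, ℓ ≤ (A ∩ L i).card then 1 else 0 := by
  set p := binomTail θ q ℓ with hp
  set κ : ℝ := ℓ ^ 2 / (q ^ 2 * θ) with hκ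
  have hp0 : 0 < p := lt_of_lt_of_le (by positivity) (pow_le_binomTail h0.le h1 hℓq)
  have hκ0 : 0 ≤ κ := by positivity
  have hN0' : (0 : ℝ) < N := by exact_mod_cast hN0
  let I : ι → Finset α → ℝ := fun i A => if ℓ ≤ (A ∩ L i).card then 1 else 0
  have hI : ∀ i, randomSubsetExp θ U (I i) = p := fun i => by
    rw [hp, ← hLq i]; exact randomSubsetExp.inter_card_ge θ (hLU i) ℓ
  have hpair : ∀ i j, randomSubsetExp θ U (fun A => I i A * I j A) ≤
      p ^ 2 + ((if i = j then p else 0) +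
        if i ≠ j ∧ ¬ Disjoint (L i) (L j) then κ * p ^ 2 else 0) := by
    intro i j
    by_cases hij : i = j
    · subst hij
      have : ∀ A, I i A * I i A = I i A := fun A => by simp only [I]; split_ifs <;> norm_num
      simp only [this, hI]
      simp only [if_true, ne_eq, not_true_eq_false, false_and, if_false]
      nlinarith [sq_nonneg p]
    · by_cases hd : Disjoint (L i) (L j)
      · rw [randomSubsetExp.mul_of_disjoint θ (hLU i) (hLU j) hd
          (fun A => if ℓ ≤ A.card then 1 else 0) (fun A => if ℓ ≤ A.card then 1 else 0),
          randomSubsetExp.card_ge, randomSubsetExp.card_ge, hLq, hLq]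
        simp [hij, hd, sq, hp]
      · rw [if_neg hij, if_pos ⟨hij, hd⟩, zero_add]
        have hc : (L i ∩ L j).card = 1 :=
          le_antisymm (hL i j hij) (Finset.card_pos.2 (Finset.not_disjoint_iff_nonempty_inter.1 hd))
        obtain ⟨x, hx⟩ := Finset.card_eq_one.1 hc
        exact randomSubsetExp_mul_le_of_inter_singleton h0 h1 hℓ hℓq (hLU i) (hLU j) (hLq i)
          (hLq j) hx
  have hsecond : randomSubsetExp θ U (fun A => (∑ i, I i A) ^ 2) ≤
      (N * p) ^ 2 + (N * p + N * (D * (κ * p ^ 2))) := by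
    have e : ∀ A, (∑ i, I i A) ^ 2 = ∑ i, ∑ j, I i A * I j A := fun A => by
      rw [sq, Finset.sum_mul_sum]
    simp only [e]
    rw [randomSubsetExp.sum]
    calc _ ≤ ∑ i : ι, ((N : ℝ) * p ^ 2 + (p + D * (κ * p ^ 2))) := by
          refine Finset.sum_le_sum fun i _ => ?_
          rw [randomSubsetExp.sum]
          refine (Finset.sum_le_sum fun j _ => hpair i j).trans ?_
          rw [Finset.sum_add_distrib, Finset.sum_add_distrib, Finset.sum_ite_eq,
            ← Finset.sum_filter, Finset.sum_const, Finset.sum_const, Finset.card_univ, hN,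
            nsmul_eq_mul, nsmul_eq_mul, if_pos (Finset.mem_univ i)]
          have : ((Finset.univ.filter fun j => i ≠ j ∧ ¬ Disjoint (L i) (L j)).card : ℝ) ≤ D := by
            exact_mod_cast hD i
          gcongr
      _ = _ := by
          rw [Finset.sum_const, Finset.card_univ, hN, nsmul_eq_mul]; ring
  have hcheb : (N * p) ^ 2 * (1 - randomSubsetExp θ U fun A =>
      if ∃ i, ℓ ≤ (A ∩ L i).card then 1 else 0) ≤ N * p + N * (D * (κ * p ^ 2)) := by
    have hvar : randomSubsetExp θ U (fun A => (∑ i, I i A - N * p) ^ 2) ≤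
        N * p + N * (D * (κ * p ^ 2)) := by
      have e : ∀ A, (∑ i, I i A - N * p) ^ 2 =
          ((∑ i, I i A) ^ 2 - (2 * (N * p)) * ∑ i, I i A) + (N * p) ^ 2 := fun A => by ring
      rw [randomSubsetExp.congr fun A _ => e A, randomSubsetExp.add, randomSubsetExp.sub,
        randomSubsetExp.const, randomSubsetExp.mul_left, randomSubsetExp.sum]
      simp only [hI, Finset.sum_const, Finset.card_univ, hN, nsmul_eq_mul]
      linarith
    refine le_trans ?_ hvar
    have hconst : 1 - randomSubsetExp θ U (fun A => if ∃ i, ℓ ≤ (A ∩ L i).card then 1 else 0) =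
        randomSubsetExp θ U fun A => 1 - if ∃ i, ℓ ≤ (A ∩ L i).card then 1 else 0 := by
      rw [randomSubsetExp.sub, randomSubsetExp.const]
    rw [hconst, ← randomSubsetExp.mul_left]
    refine randomSubsetExp.mono h0.le h1 fun A _ => ?_
    split_ifs with hA
    · simp only [sub_self, mul_zero]; positivity
    · have : ∑ i, I i A = 0 := Finset.sum_eq_zero fun i _ => if_neg fun h => hA ⟨i, h⟩
      rw [this]; simp
  have hpos : 0 < (N * p) ^ 2 := by positivity
  have : 1 - randomSubsetExp θ U (fun A => if ∃ i, ℓ ≤ (A ∩ L i).card then 1 else 0) ≤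
      1 / (N * p) + D * κ / N := by
    have e : 1 / (N * p) + D * κ / N = (N * p + N * (D * (κ * p ^ 2))) / (N * p) ^ 2 := by
      field_simp
    rw [e, le_div_iff₀ hpos]
    linarith
  linarith

end RandomSubset

section Lines

variable {K : Type*} [Field K] [Fintype K]

/-- The points of the line through `a` with direction `d`. -/
def linePoints {V : Type*} [AddCommGroup V] [Module K V] [DecidableEq V] (a d : V) : Finset V :=
  Finset.univ.image fun s : K => a + s • d

variable {V : Type*} [AddCommGroup V] [Module K V] [DecidableEq V]

lemma card_linePoints (a : V) {d : V} (hd : d ≠ 0) :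
    (linePoints (K := K) a d).card = Fintype.card K := by
  rw [linePoints, Finset.card_image_of_injective, Finset.card_univ]
  intro s t h
  exact smul_left_injective K hd (add_left_cancel h)

lemma existsRichFlat_one_iff (ℓ : ℕ) (A : Finset V) :
    ExistsRichFlat K 1 ℓ A ↔ ∃ a d : V, d ≠ 0 ∧ ℓ ≤ (A ∩ linePoints (K := K) a d).card := by
  constructor
  · rintro ⟨S, ⟨W, hW, v, rfl⟩, h⟩
    obtain ⟨d, hd, hdW⟩ := finrank_eq_one_iff'.1 hW
    refine ⟨v, d, by simpa using hd, h.trans ?_⟩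
    rw [← Set.ncard_coe_finset]
    refine Set.ncard_le_ncard ?_ (Finset.finite_toSet _)
    rintro _ ⟨⟨w, hw, rfl⟩, hA⟩
    obtain ⟨c, hc⟩ := hdW ⟨w, hw⟩
    simp only [linePoints, Finset.coe_inter, Finset.coe_image, Finset.coe_univ, Set.image_univ]
    exact ⟨hA, c, by simpa using congrArg (fun z : W => v + (z : V)) hc⟩
  · rintro ⟨a, d, hd, h⟩
    refine ⟨_, ⟨K ∙ d, finrank_span_singleton hd, a, rfl⟩, h.trans ?_⟩
    rw [← Set.ncard_coe_finset]
    refine Set.ncard_le_ncard ?_ ((Finset.finite_toSet A).inter_of_right _)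
    rintro x hx
    simp only [linePoints, Finset.coe_inter, Finset.coe_image, Finset.coe_univ,
      Set.image_univ] at hx
    obtain ⟨hA, s, rfl⟩ := hx
    exact ⟨⟨s • d, Submodule.smul_mem _ _ (Submodule.mem_span_singleton_self d), rfl⟩, hA⟩

lemma linePoints_reparam (a d : V) (s : K) {c : K} (hc : c ≠ 0) :
    linePoints (K := K) (a + s • d) (c • d) = linePoints (K := K) a d := by
  ext x
  simp only [linePoints, Finset.mem_image, Finset.mem_univ, true_and]
  constructor
  · rintro ⟨t, rfl⟩
    exact ⟨s + t * c, by rw [add_smul, mul_smul, add_assoc]⟩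
  · rintro ⟨t, rfl⟩
    refine ⟨(t - s) / c, ?_⟩
    rw [smul_smul, div_mul_cancel₀ _ hc, add_assoc, ← add_smul, add_sub_cancel]

variable [Fintype V]

/-- The first moment bound for the existence of a rich line. -/
lemma prob_existsRichFlat_le {θ : ℝ} (h0 : 0 ≤ θ) (h1 : θ ≤ 1) (ℓ : ℕ) {q : ℕ}
    (hq : Fintype.card K = q) :
    (q * (q - 1 : ℕ) : ℝ) * prRandomSubset (Finset.univ : Finset V) θ
      (fun A => ExistsRichFlat K 1 ℓ A) ≤
      (Fintype.card V : ℝ) ^ 2 * (q.choose ℓ * θ ^ ℓ) := by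
  classical
  simp only [existsRichFlat_one_iff]
  rw [prRandomSubset_eq_exp, ← randomSubsetExp.mul_left]
  let P : Finset (V × V) := Finset.univ.filter fun x => x.2 ≠ 0
  calc _ ≤ randomSubsetExp θ (Finset.univ : Finset V) (fun A => ∑ x ∈ P,
          if ℓ ≤ (A ∩ linePoints (K := K) x.1 x.2).card then 1 else 0) := by
        refine randomSubsetExp.mono h0 h1 fun A _ => ?_
        split_ifs with h
        · obtain ⟨a, d, hd, h⟩ := h
          rw [← Finset.sum_filter, Finset.sum_const, nsmul_eq_mul, mul_one, mul_one]
          have hcard : ((Finset.univ : Finset K) ×ˢ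
              (Finset.univ.erase 0 : Finset K)).card = q * (q - 1) := by
            rw [Finset.card_product, Finset.card_erase_of_mem (Finset.mem_univ _),
              Finset.card_univ, hq]
          have hle := Finset.card_le_card_of_injOn (fun x : K × K => (a + x.1 • d, x.2 • d))
            (s := (Finset.univ : Finset K) ×ˢ (Finset.univ.erase 0 : Finset K))
            (t := P.filter fun x => ℓ ≤ (A ∩ linePoints (K := K) x.1 x.2).card) ?_ ?_
          · rw [hcard] at hle
            exact_mod_cast hle
          · rintro ⟨s, c⟩ hx
            have hc : c ≠ 0 := by simpa using hx
            simp only [P, Finset.coe_filter, Finset.mem_filter, Finset.mem_univ, true_and,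
              Set.mem_ofPred_eq]
            exact ⟨smul_ne_zero hc hd, by rwa [linePoints_reparam a d s hc]⟩
          · rintro ⟨s, c⟩ _ ⟨s', c'⟩ _ h
            simp only [Prod.mk.injEq] at h
            exact Prod.ext (smul_left_injective K hd (add_left_cancel h.1))
              (smul_left_injective K hd h.2)
        · rw [mul_zero]
          exact Finset.sum_nonneg fun _ _ => by positivity
    _ ≤ ∑ x ∈ P, (q.choose ℓ : ℝ) * θ ^ ℓ := by
        rw [randomSubsetExp.sum]
        refine Finset.sum_le_sum fun x hx => ?_
        rw [randomSubsetExp.inter_card_ge θ (Finset.subset_univ _),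
          card_linePoints _ (Finset.mem_filter.1 hx).2, hq]
        exact binomTail_le h0 h1 q ℓ
    _ ≤ _ := by
        rw [Finset.sum_const, nsmul_eq_mul]
        have : (P.card : ℝ) ≤ (Fintype.card V : ℝ) ^ 2 := by
          refine le_trans (Nat.cast_le.2 (Finset.card_le_univ P)) ?_
          rw [Fintype.card_prod, sq, Nat.cast_mul]
        gcongr

end Lines

section Graph

lemma graphLine_direction_ne_zero {K : Type*} [Field K] {m : ℕ} (v : Fin m → K) :
    (Fin.cons 1 v : Fin (m + 1) → K) ≠ 0 := fun h => by
  simpa using congrFun h 0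

variable {K : Type*} [Field K] [Fintype K] [DecidableEq K] {m : ℕ}

/-- The line of points `(s, u + s v)`. -/
def graphLine (x : (Fin m → K) × (Fin m → K)) : Finset (Fin (m + 1) → K) :=
  linePoints (K := K) (Fin.cons 0 x.1 : Fin (m + 1) → K) (Fin.cons 1 x.2 : Fin (m + 1) → K)

lemma mem_graphLine {x : (Fin m → K) × (Fin m → K)} {y : Fin (m + 1) → K} :
    y ∈ graphLine x ↔ Fin.tail y = x.1 + y 0 • x.2 := by
  simp only [graphLine, linePoints, Finset.mem_image, Finset.mem_univ, true_and]
  constructor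
  · rintro ⟨s, rfl⟩
    ext i
    simp [Fin.tail]
  · intro h
    refine ⟨y 0, ?_⟩
    ext i
    refine Fin.cases ?_ (fun j => ?_) i
    · simp
    · simpa [Fin.tail] using (congrFun h j).symm

lemma card_graphLine_inter_le {x y : (Fin m → K) × (Fin m → K)} (h : x ≠ y) :
    (graphLine x ∩ graphLine y).card ≤ 1 := by
  rw [Finset.card_le_one]
  intro a ha b hb
  simp only [Finset.mem_inter, mem_graphLine] at ha hb
  have h0 : a 0 = b 0 := by
    by_contra hne
    have e : (a 0 - b 0) • (x.2 - y.2) = 0 := by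
      have h1 := ha.1.symm.trans ha.2
      have h2 := hb.1.symm.trans hb.2
      linear_combination (norm := module) h1 - h2
    have h2 : x.2 = y.2 := by
      rcases smul_eq_zero.1 e with h | h
      · exact absurd (sub_eq_zero.1 h) hne
      · exact sub_eq_zero.1 h
    have h1 := ha.1.symm.trans ha.2
    rw [h2] at h1
    exact h (Prod.ext (add_right_cancel h1) h2)
  have ht : Fin.tail a = Fin.tail b := by rw [ha.1, hb.1, h0]
  rw [← Fin.cons_self_tail a, ← Fin.cons_self_tail b, h0, ht]

lemma card_graphLine_meeting_le (x : (Fin m → K) × (Fin m → K)) :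
    (Finset.univ.filter fun y => x ≠ y ∧ ¬ Disjoint (graphLine x) (graphLine y)).card ≤
      Fintype.card K ^ (m + 1) := by
  have hc : Fintype.card K ^ (m + 1) =
      (Finset.univ : Finset (K × (Fin m → K))).card := by
    rw [Finset.card_univ, Fintype.card_prod, Fintype.card_fun, Fintype.card_fin, pow_succ']
  rw [hc]
  refine (Finset.card_le_card ?_).trans
    (Finset.card_image_le (f := fun z : K × (Fin m → K) => (x.1 + z.1 • x.2 - z.1 • z.2, z.2)))
  intro y hy
  obtain ⟨_, hd⟩ := (Finset.mem_filter.1 hy).2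
  obtain ⟨a, ha, hb⟩ := Finset.not_disjoint_iff.1 hd
  rw [mem_graphLine] at ha hb
  refine Finset.mem_image.2 ⟨(a 0, y.2), Finset.mem_univ _, Prod.ext ?_ rfl⟩
  simp only
  rw [← ha, hb, add_sub_cancel_right]

lemma one_sub_le_prob_existsRichFlat {θ : ℝ} (h0 : 0 < θ) (h1 : θ ≤ 1) {q ℓ : ℕ}
    (hℓ : 1 ≤ ℓ) (hℓq : ℓ ≤ q) (hq : Fintype.card K = q) :
    1 - (1 / ((q : ℝ) ^ (2 * m) * binomTail θ q ℓ) +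
      (q : ℝ) ^ (m + 1) * (ℓ ^ 2 / (q ^ 2 * θ)) / (q : ℝ) ^ (2 * m)) ≤
      prRandomSubset (Finset.univ : Finset (Fin (m + 1) → K)) θ
        (fun A => ExistsRichFlat K 1 ℓ A) := by
  classical
  have hN : Fintype.card ((Fin m → K) × (Fin m → K)) = q ^ (2 * m) := by
    rw [Fintype.card_prod, Fintype.card_fun, Fintype.card_fin, hq]; ring
  have := one_sub_le_prob_exists_rich h0 h1 (U := Finset.univ) (L := graphLine (K := K) (m := m))
    hℓ hℓq hN (pow_pos (by omega) _) (fun _ => Finset.subset_univ _)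
    (fun x => (card_linePoints _ (graphLine_direction_ne_zero x.2)).trans hq)
    (fun _ _ => card_graphLine_inter_le) (fun x => hq ▸ card_graphLine_meeting_le x)
  push_cast at this
  refine this.trans ?_
  simp only [existsRichFlat_one_iff]
  rw [prRandomSubset_eq_exp]
  refine randomSubsetExp.mono h0.le h1 fun A _ => ?_
  split_ifs with h h'
  · rfl
  · obtain ⟨x, hx⟩ := h
    exact absurd ⟨_, _, graphLine_direction_ne_zero x.2, hx⟩ h'
  · norm_num
  · rfl

end Graph

section Estimates

lemma exp_pow_le_one_sub_pow {θ : ℝ} (h0 : 0 ≤ θ) (h2 : θ ≤ 1 / 2) {q ℓ : ℕ}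
    (h : θ * q ≤ 2 * ℓ) : (1 / 81 : ℝ) ^ ℓ ≤ (1 - θ) ^ (q - ℓ) := by
  have h1 : Real.exp (-(2 * θ)) ≤ 1 - θ := by
    rw [Real.exp_neg, inv_le_comm₀ (Real.exp_pos _) (by linarith)]
    have := Real.add_one_le_exp (2 * θ)
    refine le_trans ?_ this
    rw [inv_le_iff_one_le_mul₀ (by linarith)]
    nlinarith
  have he : Real.exp 4 ≤ 81 := by
    have := pow_le_pow_left₀ (Real.exp_pos 1).le Real.exp_one_lt_three.le 4
    rw [← Real.exp_nat_mul] at this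
    norm_num at this
    exact this
  calc (1 / 81 : ℝ) ^ ℓ ≤ (Real.exp (-4)) ^ ℓ := by
        gcongr
        rw [Real.exp_neg, one_div]
        exact inv_anti₀ (Real.exp_pos 4) he
    _ ≤ Real.exp (-(2 * θ)) ^ q := by
        rw [← Real.exp_nat_mul, ← Real.exp_nat_mul]
        exact Real.exp_le_exp.2 (by linarith)
    _ ≤ (1 - θ) ^ q := by gcongr
    _ ≤ (1 - θ) ^ (q - ℓ) := pow_le_pow_of_le_one (by linarith) (by linarith) (Nat.sub_le _ _)

lemma one_div_mul_binomTail_le {θ t M : ℝ} (h0 : 0 < θ) (h1 : θ ≤ 1) (ht : 0 < t) (hM : 1 ≤ M)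
    {q ℓ : ℕ} (hℓ : 3 ≤ ℓ) (hℓq : ℓ ≤ q) (hB : t ^ ℓ * (M * q.choose ℓ) = 1)
    (htθ : 81 * t ≤ θ) :
    1 / (M * binomTail θ q ℓ) ≤ 3 / M + 81 * t / θ := by
  have hp : 0 < binomTail θ q ℓ := lt_of_lt_of_le (by positivity) (pow_le_binomTail h0.le h1 hℓq)
  have hM0 : 0 < M := by linarith
  by_cases hA : 2 * (ℓ : ℝ) ≤ θ * q
  · have := third_le_binomTail h0.le h1 hℓ hA
    have h3 : 1 / (M * binomTail θ q ℓ) ≤ 3 / M := by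
      rw [div_le_div_iff₀ (by positivity) hM0]
      nlinarith
    have : 0 ≤ 81 * t / θ := by positivity
    linarith
  · rw [not_le] at hA
    have hC1 : (1 : ℝ) ≤ q.choose ℓ := by exact_mod_cast Nat.choose_pos hℓq
    have hlow : (q.choose ℓ : ℝ) * (θ ^ ℓ * (1 / 81) ^ ℓ) ≤ binomTail θ q ℓ := by
      by_cases h2 : θ ≤ 1 / 2
      · refine le_trans ?_ (le_binomTail h0.le h1 hℓq)
        have := exp_pow_le_one_sub_pow h0.le h2 hA.le
        gcongr
      · rw [not_le] at h2
        refine le_trans ?_ (pow_le_binomTail h0.le h1 hℓq)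
        have hq : q ≤ 4 * ℓ := by
          have : (q : ℝ) ≤ 4 * ℓ := by nlinarith [(Nat.cast_nonneg q : (0 : ℝ) ≤ q)]
          exact_mod_cast this
        have hC : (q.choose ℓ : ℝ) ≤ 81 ^ ℓ := by
          calc (q.choose ℓ : ℝ) ≤ 2 ^ q := by exact_mod_cast Nat.choose_le_two_pow q ℓ
            _ ≤ 2 ^ (4 * ℓ) := by gcongr; norm_num
            _ = 16 ^ ℓ := by rw [pow_mul]; norm_num
            _ ≤ 81 ^ ℓ := by gcongr; norm_num
        calc (q.choose ℓ : ℝ) * (θ ^ ℓ * (1 / 81) ^ ℓ) ≤ 81 ^ ℓ * (θ ^ ℓ * (1 / 81) ^ ℓ) := by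
              gcongr
          _ = θ ^ ℓ := by
              rw [mul_left_comm, ← mul_pow]; norm_num
    have hr : θ / (81 * t) ≤ M * binomTail θ q ℓ := by
      calc θ / (81 * t) ≤ (θ / (81 * t)) ^ ℓ :=
            le_self_pow₀ ((one_le_div (by positivity)).2 htθ) (by omega)
        _ = (θ / (81 * t)) ^ ℓ * (t ^ ℓ * (M * q.choose ℓ)) := by rw [hB, mul_one]
        _ = M * (q.choose ℓ * (θ ^ ℓ * (1 / 81) ^ ℓ)) := by
            rw [div_pow, mul_pow, div_pow, one_pow]; field_simp
        _ ≤ _ := by gcongr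
    have h3 : 1 / (M * binomTail θ q ℓ) ≤ 81 * t / θ := by
      refine (one_div_le_one_div_of_le (by positivity) hr).trans (le_of_eq ?_)
      rw [one_div_div]
    have : 0 ≤ 3 / M := by positivity
    linarith

lemma choose_mul_pow_le (q ℓ : ℕ) : (q.choose ℓ : ℝ) * ℓ ^ ℓ ≤ (3 * q) ^ ℓ := by
  have h1 : (q.choose ℓ : ℝ) ≤ (q : ℝ) ^ ℓ / ℓ.factorial := Nat.choose_le_pow_div ℓ q
  have h2 := Real.pow_div_factorial_le_exp (ℓ : ℝ) (Nat.cast_nonneg _) ℓ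
  have h3 : Real.exp ℓ ≤ 3 ^ ℓ := by
    have := pow_le_pow_left₀ (Real.exp_pos 1).le Real.exp_one_lt_three.le ℓ
    rwa [← Real.exp_nat_mul, mul_one] at this
  calc (q.choose ℓ : ℝ) * ℓ ^ ℓ ≤ (q : ℝ) ^ ℓ / ℓ.factorial * ℓ ^ ℓ := by gcongr
    _ = (q : ℝ) ^ ℓ * ((ℓ : ℝ) ^ ℓ / ℓ.factorial) := by ring
    _ ≤ (q : ℝ) ^ ℓ * 3 ^ ℓ := by gcongr; exact h2.trans h3
    _ = (3 * q) ^ ℓ := by rw [mul_pow, mul_comm]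

lemma covariance_term_le {θ t : ℝ} (h0 : 0 < θ) (ht : 0 < t) {q ℓ m : ℕ} (hm : 1 ≤ m)
    (hℓ : 3 ≤ ℓ) (hℓq : ℓ ≤ q) (hB : t ^ ℓ * ((q : ℝ) ^ (2 * m) * q.choose ℓ) = 1) :
    (q : ℝ) ^ (m + 1) * (ℓ ^ 2 / (q ^ 2 * θ)) / (q : ℝ) ^ (2 * m) ≤ 12 * t / θ := by
  have hq0 : (0 : ℝ) < q := by exact_mod_cast (by omega : 0 < q)
  have hℓ0 : (0 : ℝ) < ℓ := by exact_mod_cast (by omega : 0 < ℓ)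
  have hQ : (ℓ : ℝ) ≤ (q : ℝ) ^ m := by
    exact_mod_cast hℓq.trans (Nat.le_self_pow (by omega) q)
  have hℓ2 : (ℓ : ℝ) ^ 2 ≤ 4 ^ ℓ := by
    have : (ℓ : ℝ) ≤ 2 ^ ℓ := by exact_mod_cast Nat.lt_two_pow_self.le
    calc (ℓ : ℝ) ^ 2 ≤ (2 ^ ℓ) ^ 2 := by gcongr
      _ = 4 ^ ℓ := by rw [← pow_mul, mul_comm, pow_mul]; norm_num
  have hpow : (ℓ : ℝ) ^ ℓ * (q : ℝ) ^ (2 * m) ≤ (4 * (q : ℝ) ^ m) ^ ℓ := by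
    obtain ⟨k, rfl⟩ : ∃ k, ℓ = k + 2 := ⟨ℓ - 2, by omega⟩
    calc ((k + 2 : ℕ) : ℝ) ^ (k + 2) * (q : ℝ) ^ (2 * m)
        = ((k + 2 : ℕ) : ℝ) ^ 2 * ((k + 2 : ℕ) : ℝ) ^ k * (q : ℝ) ^ (2 * m) := by ring
      _ ≤ 4 ^ (k + 2) * ((q : ℝ) ^ m) ^ k * (q : ℝ) ^ (2 * m) := by gcongr
      _ = (4 * (q : ℝ) ^ m) ^ (k + 2) := by ring
  have hmain : (ℓ : ℝ) ^ 2 ≤ 12 * t * (q : ℝ) ^ (m + 1) := by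
    refine le_of_pow_le_pow_left₀ (n := ℓ) (by omega) (by positivity) ?_
    calc ((ℓ : ℝ) ^ 2) ^ ℓ = (ℓ ^ ℓ) * ℓ ^ ℓ * (t ^ ℓ * ((q : ℝ) ^ (2 * m) * q.choose ℓ)) := by
          rw [hB]; ring
      _ = t ^ ℓ * (ℓ ^ ℓ * (q : ℝ) ^ (2 * m)) * (q.choose ℓ * ℓ ^ ℓ) := by ring
      _ ≤ t ^ ℓ * (4 * (q : ℝ) ^ m) ^ ℓ * (3 * q) ^ ℓ := by
          gcongr
          exact choose_mul_pow_le q ℓ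
      _ = (12 * t * (q : ℝ) ^ (m + 1)) ^ ℓ := by
          rw [← mul_pow, ← mul_pow]; ring
  have e : (q : ℝ) ^ (m + 1) * (ℓ ^ 2 / (q ^ 2 * θ)) / (q : ℝ) ^ (2 * m) =
      ℓ ^ 2 / ((q : ℝ) ^ (m + 1) * θ) := by
    rw [two_mul, pow_add, pow_add, pow_one]
    field_simp
  rw [e, div_le_div_iff₀ (by positivity) h0]
  nlinarith

lemma rpow_neg_one_div_pow_mul {B : ℝ} (hB : 0 < B) {ℓ : ℕ} (hℓ : ℓ ≠ 0) :
    (B ^ (-(1 : ℝ) / (ℓ : ℝ))) ^ ℓ * B = 1 := by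
  rw [← Real.rpow_natCast, ← Real.rpow_mul hB.le,
    div_mul_cancel₀ _ (Nat.cast_ne_zero.2 hℓ), Real.rpow_neg_one, inv_mul_cancel₀ hB.ne']

lemma prRandomSubset_nonneg {α : Type*} {θ : ℝ} (h0 : 0 ≤ θ) (h1 : θ ≤ 1) (U : Finset α)
    (E : Finset α → Prop) : 0 ≤ prRandomSubset U θ E := by
  classical
  rw [prRandomSubset_eq_exp]
  exact (randomSubsetExp.const θ U 0).symm.trans_le
    (randomSubsetExp.mono h0 h1 fun A _ => by split_ifs <;> norm_num)

lemma prRandomSubset_le_one {α : Type*} {θ : ℝ} (h0 : 0 ≤ θ) (h1 : θ ≤ 1) (U : Finset α)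
    (E : Finset α → Prop) : prRandomSubset U θ E ≤ 1 := by
  classical
  rw [prRandomSubset_eq_exp]
  exact (randomSubsetExp.mono h0 h1 (g := fun _ => 1) fun A _ => by
    split_ifs <;> norm_num).trans_eq (randomSubsetExp.const θ U 1)

end Estimates

section Threshold

variable {K : Type*} [Field K] [Fintype K]

lemma prob_existsRichFlat_le_ratio {θ t : ℝ} (h0 : 0 ≤ θ) (h1 : θ ≤ 1) (ht : 0 < t)
    (hθt : θ ≤ t) {n q ℓ : ℕ} (hn : 2 ≤ n) (hq : Fintype.card K = q) (hℓ : 3 ≤ ℓ) (hℓq : ℓ ≤ q)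
    (hB : t ^ ℓ * ((q : ℝ) ^ (2 * n - 2) * q.choose ℓ) = 1) :
    prRandomSubset (Finset.univ : Finset (Fin n → K)) θ (fun A => ExistsRichFlat K 1 ℓ A) ≤
      2 * (θ / t) := by
  classical
  obtain ⟨m, rfl⟩ : ∃ m, n = m + 1 := ⟨n - 1, by omega⟩
  have hmain := prob_existsRichFlat_le (V := Fin (m + 1) → K) h0 h1 ℓ hq
  have hP := prRandomSubset_nonneg h0 h1 (Finset.univ : Finset (Fin (m + 1) → K))
    (fun A => ExistsRichFlat K 1 ℓ A)
  set P := prRandomSubset (Finset.univ : Finset (Fin (m + 1) → K)) θ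
    (fun A => ExistsRichFlat K 1 ℓ A)
  have hq3 : (3 : ℝ) ≤ q := by exact_mod_cast hℓ.trans hℓq
  rw [Fintype.card_fun, Fintype.card_fin, hq, Nat.cast_sub (by omega)] at hmain
  push_cast at hmain
  rw [show 2 * (m + 1) - 2 = 2 * m by omega] at hB
  have hX : (q : ℝ) ^ (2 * m) * (q.choose ℓ * θ ^ ℓ) = (θ / t) ^ ℓ := by
    rw [div_pow, eq_div_iff (by positivity)]
    linear_combination θ ^ ℓ * hB
  have hXle : (θ / t) ^ ℓ ≤ θ / t :=
    pow_le_of_le_one (by positivity) ((div_le_one ht).2 hθt) (by omega)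
  have h2 : (q : ℝ) ^ 2 * P ≤ (q : ℝ) ^ 2 * (2 * (θ / t) ^ ℓ) := by
    rw [← hX]
    calc (q : ℝ) ^ 2 * P ≤ 2 * (q * (q - 1) * P) := by
          nlinarith [mul_nonneg hP (by nlinarith : (0 : ℝ) ≤ q * (q - 2))]
      _ ≤ 2 * (((q : ℝ) ^ (m + 1)) ^ 2 * (q.choose ℓ * θ ^ ℓ)) := by gcongr
      _ = _ := by ring
  have := le_of_mul_le_mul_left h2 (by positivity)
  linarith

lemma one_sub_le_prob_existsRichFlat_ratio {θ t : ℝ} (h0 : 0 < θ) (h1 : θ ≤ 1) (ht : 0 < t)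
    (htθ : 81 * t ≤ θ) {n q ℓ : ℕ} (hn : 2 ≤ n) (hq : Fintype.card K = q) (hℓ : 3 ≤ ℓ)
    (hℓq : ℓ ≤ q) (hB : t ^ ℓ * ((q : ℝ) ^ (2 * n - 2) * q.choose ℓ) = 1) :
    1 - (3 / ((n : ℝ) + q) + 93 * (t / θ)) ≤
      prRandomSubset (Finset.univ : Finset (Fin n → K)) θ
        (fun A => ExistsRichFlat K 1 ℓ A) := by
  classical
  obtain ⟨m, rfl⟩ : ∃ m, n = m + 1 := ⟨n - 1, by omega⟩
  rw [show 2 * (m + 1) - 2 = 2 * m by omega] at hB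
  have hlow := one_sub_le_prob_existsRichFlat (K := K) (m := m) h0 h1 (by omega) hℓq hq
  have hsize : (((m + 1 : ℕ) : ℝ) + q) ≤ (q : ℝ) ^ (2 * m) := by
    have hm : m + 1 ≤ q ^ m := by
      have : m < 2 ^ m := Nat.lt_two_pow_self
      have : 2 ^ m ≤ q ^ m := Nat.pow_le_pow_left (by omega) m
      omega
    have hq' : q ≤ q ^ m := Nat.le_self_pow (by omega) q
    have : m + 1 + q ≤ q ^ (2 * m) := by
      rw [two_mul, pow_add]
      nlinarith [Nat.mul_le_mul hm hq']
    exact_mod_cast this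
  have hpos : (0 : ℝ) < ((m + 1 : ℕ) : ℝ) + q := by positivity
  have hM : (1 : ℝ) ≤ (q : ℝ) ^ (2 * m) := by
    refine le_trans ?_ hsize
    push_cast
    linarith [(Nat.cast_nonneg m : (0 : ℝ) ≤ m), (Nat.cast_nonneg q : (0 : ℝ) ≤ q)]
  have hfirst := one_div_mul_binomTail_le h0 h1 ht hM hℓ hℓq hB htθ
  have hsecond := covariance_term_le h0 ht (by omega) hℓ hℓq hB
  have hthree : 3 / (q : ℝ) ^ (2 * m) ≤ 3 / (((m + 1 : ℕ) : ℝ) + q) := by gcongr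
  have : 81 * t / θ + 12 * t / θ = 93 * (t / θ) := by ring
  linarith

end Threshold

theorem stmt4 (n q ℓ : ℕ → ℕ) (F : ℕ → Type) [∀ i, Field (F i)] [∀ i, Fintype (F i)]
    (hn : ∀ i, 2 ≤ n i)
    (hq : ∀ i, Fintype.card (F i) = q i) (hqpp : ∀ i, IsPrimePow (q i))
    (hnq : Tendsto (fun i => n i + q i) atTop atTop)
    (hℓ : ∀ i, 3 ≤ ℓ i ∧ ℓ i ≤ q i)
    (hℓO : (fun i => (ℓ i : ℝ)) =O[atTop] fun i => (n i : ℝ) * Real.log (q i))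
    (θ : ℕ → ℝ) (hθ : ∀ i, 0 ≤ θ i ∧ θ i ≤ 1) :
    (θ =o[atTop] (fun i =>
        (((q i : ℝ) ^ (2 * n i - 2)) * ((q i).choose (ℓ i) : ℝ)) ^ (-(1 : ℝ) / (ℓ i : ℝ))) →
      Tendsto (fun i => prRandomSubset (Finset.univ : Finset (Fin (n i) → F i)) (θ i)
        (fun A => ExistsRichFlat (F i) 1 (ℓ i) A)) atTop (nhds 0)) ∧
    ((fun i =>
        (((q i : ℝ) ^ (2 * n i - 2)) * ((q i).choose (ℓ i) : ℝ)) ^ (-(1 : ℝ) / (ℓ i : ℝ)))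
        =o[atTop] θ →
      Tendsto (fun i => prRandomSubset (Finset.univ : Finset (Fin (n i) → F i)) (θ i)
        (fun A => ExistsRichFlat (F i) 1 (ℓ i) A)) atTop (nhds 1)) := by
  let t : ℕ → ℝ := fun i =>
    (((q i : ℝ) ^ (2 * n i - 2)) * ((q i).choose (ℓ i) : ℝ)) ^ (-(1 : ℝ) / (ℓ i : ℝ))
  have hbase : ∀ i, 0 < ((q i : ℝ) ^ (2 * n i - 2)) * ((q i).choose (ℓ i) : ℝ) := fun i => by
    have h1 := Nat.choose_pos (hℓ i).2
    have h2 : 0 < q i := by have := hℓ i; omega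
    positivity
  have ht : ∀ i, 0 < t i := fun i => Real.rpow_pos_of_pos (hbase i) _
  have hB : ∀ i, t i ^ ℓ i * (((q i : ℝ) ^ (2 * n i - 2)) * ((q i).choose (ℓ i) : ℝ)) = 1 :=
    fun i => rpow_neg_one_div_pow_mul (hbase i) (by have := hℓ i; omega)
  constructor
  · intro h
    change θ =o[atTop] t at h
    have hlim : Tendsto (fun i => 2 * (θ i / t i)) atTop (nhds 0) := by
      simpa using h.tendsto_div_nhds_zero.const_mul 2
    refine tendsto_of_tendsto_of_tendsto_of_le_of_le' tendsto_const_nhds hlim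
      (Eventually.of_forall fun i => prRandomSubset_nonneg (hθ i).1 (hθ i).2 _ _) ?_
    filter_upwards [h.bound one_pos] with i hi
    rw [one_mul, Real.norm_of_nonneg (hθ i).1, Real.norm_of_nonneg (ht i).le] at hi
    exact prob_existsRichFlat_le_ratio (hθ i).1 (hθ i).2 (ht i) hi (hn i) (hq i) (hℓ i).1
      (hℓ i).2 (hB i)
  · intro h
    change t =o[atTop] θ at h
    have hsize : Tendsto (fun i => (n i : ℝ) + q i) atTop atTop := by
      simpa [Function.comp_def] using tendsto_natCast_atTop_atTop (R := ℝ) |>.comp hnq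
    have hlim : Tendsto (fun i => 1 - (3 / ((n i : ℝ) + q i) + 93 * (t i / θ i))) atTop
        (nhds 1) := by
      simpa using ((hsize.const_div_atTop 3).add
        (h.tendsto_div_nhds_zero.const_mul 93)).const_sub 1
    refine tendsto_of_tendsto_of_tendsto_of_le_of_le' hlim tendsto_const_nhds ?_
      (Eventually.of_forall fun i => prRandomSubset_le_one (hθ i).1 (hθ i).2 _ _)
    filter_upwards [h.bound (by norm_num : (0 : ℝ) < 1 / 81)] with i hi
    rw [Real.norm_of_nonneg (hθ i).1, Real.norm_of_nonneg (ht i).le] at hi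
    have hti := ht i
    exact one_sub_le_prob_existsRichFlat_ratio (by linarith) (hθ i).2 hti (by linarith)
      (hn i) (hq i) (hℓ i).1 (hℓ i).2 (hB i)
end

section
/- Let m, n be integers with 1 ≤ m < n and q a prime power, with n + q → ∞. Let X be a random set of points of F_q^n in which each point is included independently with probability θ, and let Y be a random set of m-flats of F_q^n in which each m-flat is included independently with probability θ (independently of X). Let Γ be the event that there exists a pair (x, y) ∈ X × Y with x contained in y. If m ∈ {1, n−1}, then Γ has threshold function q^{−(1/2)((n−m)(m+1)+m)}; otherwise, Γ has threshold function q^{−n}. -/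
open Filter Asymptotics

noncomputable def prPairRandomSubset {α β : Type*} [Finite α] [Finite β] (θ : ℝ)
    (E : Finset α → Finset β → Prop) : ℝ :=
  letI := Fintype.ofFinite α
  letI := Fintype.ofFinite β
  ∑ A ∈ (Finset.univ : Finset α).powerset, ∑ B ∈ (Finset.univ : Finset β).powerset,
    @ite ℝ (E A B) (Classical.propDecidable _)
      (θ ^ (A.card + B.card) *
        (1 - θ) ^ ((Fintype.card α - A.card) + (Fintype.card β - B.card))) 0

/-- The probability that a `θ`-random subset equals `A`. -/
noncomputable def subsetWeight {α : Type*} [Fintype α] (θ : ℝ) (A : Finset α) : ℝ :=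
  θ ^ A.card * (1 - θ) ^ (Fintype.card α - A.card)

open Classical in
theorem sum_subsetWeight {α : Type*} [Fintype α] (θ : ℝ) (S : Finset α) :
    ∑ A : Finset α, subsetWeight θ A * (if S ⊆ A then 1 else 0) = θ ^ S.card := by
  have h := Finset.prod_add (fun _ : α => θ) (fun a => if a ∈ S then 0 else 1 - θ) Finset.univ
  have h1 : ∏ a : α, (θ + if a ∈ S then 0 else 1 - θ) = θ ^ S.card := by
    have : ∀ a : α, (θ + if a ∈ S then 0 else 1 - θ) = if a ∈ S then θ else 1 := by
      intro a; split_ifs <;> ring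
    simp [this]
  rw [← h1, h, Finset.powerset_univ]
  refine Finset.sum_congr rfl fun A _ => ?_
  rw [subsetWeight, mul_assoc, Finset.prod_const]
  congr 1
  split_ifs with hS
  · rw [Finset.prod_congr rfl (g := fun _ => 1 - θ), Finset.prod_const, mul_one,
      Finset.card_sdiff_of_subset (Finset.subset_univ A), Finset.card_univ]
    intro a ha
    rw [if_neg]
    exact fun h => (Finset.mem_sdiff.1 ha).2 (hS h)
  · obtain ⟨a, ha, ha'⟩ := Finset.not_subset.1 hS
    rw [mul_zero, Finset.prod_eq_zero (i := a)] <;> simp [ha, ha']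

open Classical in
theorem sum_subsetWeight_mul_sum_subsetWeight {α β : Type*} [Fintype α] [Fintype β] (θ : ℝ)
    (S : Finset α) (T : Finset β) :
    ∑ A : Finset α, ∑ B : Finset β, subsetWeight θ A * subsetWeight θ B *
      ((if S ⊆ A then 1 else 0) * (if T ⊆ B then 1 else 0)) = θ ^ S.card * θ ^ T.card := by
  rw [← sum_subsetWeight θ S, ← sum_subsetWeight θ T, Finset.sum_mul_sum]
  exact Finset.sum_congr rfl fun A _ => Finset.sum_congr rfl fun B _ => by ring

theorem subsetWeight_nonneg {α : Type*} [Fintype α] {θ : ℝ} (h0 : 0 ≤ θ) (h1 : θ ≤ 1)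
    (A : Finset α) : 0 ≤ subsetWeight θ A :=
  mul_nonneg (pow_nonneg h0 _) (pow_nonneg (sub_nonneg.2 h1) _)

open Classical in
theorem pow_card_pair_le {α β : Type*} {θ : ℝ} (h0 : 0 ≤ θ) (p p' : α × β) :
    θ ^ ({p.1, p'.1} : Finset α).card * θ ^ ({p.2, p'.2} : Finset β).card ≤
      θ ^ 4 + (if p'.1 = p.1 then θ ^ 3 else 0) + (if p'.2 = p.2 then θ ^ 3 else 0) +
        (if p' = p then θ ^ 2 else 0) := by
  have h3 : 0 ≤ θ ^ 3 := by positivity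
  have h4 : 0 ≤ θ ^ 4 := by positivity
  obtain ⟨a, b⟩ := p
  obtain ⟨a', b'⟩ := p'
  by_cases ha : a' = a <;> by_cases hb : b' = b
  · subst ha hb
    simp
    nlinarith
  · subst ha
    rw [Finset.card_pair (Ne.symm hb)]
    simp [hb]
    nlinarith
  · subst hb
    rw [Finset.card_pair (Ne.symm ha)]
    simp [ha]
    nlinarith
  · rw [Finset.card_pair (Ne.symm ha), Finset.card_pair (Ne.symm hb)]
    simp [ha, hb]
    nlinarith

/-- Expectation of a function of two independent `θ`-random subsets. -/
noncomputable def pairExpect {α β : Type*} [Fintype α] [Fintype β] (θ : ℝ)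
    (f : Finset α → Finset β → ℝ) : ℝ :=
  ∑ A : Finset α, ∑ B : Finset β, subsetWeight θ A * subsetWeight θ B * f A B

section pairExpect

variable {α β : Type*} [Fintype α] [Fintype β]

open Classical in
theorem pairExpect_subset (θ : ℝ) (S : Finset α) (T : Finset β) :
    pairExpect θ (fun A B => (if S ⊆ A then 1 else 0) * (if T ⊆ B then 1 else 0)) =
      θ ^ S.card * θ ^ T.card :=
  sum_subsetWeight_mul_sum_subsetWeight θ S T

theorem pairExpect_one (θ : ℝ) : pairExpect θ (fun (_ : Finset α) (_ : Finset β) => 1) = 1 := by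
  simpa using pairExpect_subset θ (∅ : Finset α) (∅ : Finset β)

theorem pairExpect_mono {θ : ℝ} (h0 : 0 ≤ θ) (h1 : θ ≤ 1) {f g : Finset α → Finset β → ℝ}
    (h : ∀ A B, f A B ≤ g A B) : pairExpect θ f ≤ pairExpect θ g :=
  Finset.sum_le_sum fun A _ => Finset.sum_le_sum fun B _ =>
    mul_le_mul_of_nonneg_left (h A B)
      (mul_nonneg (subsetWeight_nonneg h0 h1 A) (subsetWeight_nonneg h0 h1 B))

theorem pairExpect_add (θ : ℝ) (f g : Finset α → Finset β → ℝ) :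
    pairExpect θ (fun A B => f A B + g A B) = pairExpect θ f + pairExpect θ g := by
  simp only [pairExpect, mul_add, Finset.sum_add_distrib]

theorem pairExpect_const_mul (θ c : ℝ) (f : Finset α → Finset β → ℝ) :
    pairExpect θ (fun A B => c * f A B) = c * pairExpect θ f := by
  simp only [pairExpect, Finset.mul_sum]
  exact Finset.sum_congr rfl fun A _ => Finset.sum_congr rfl fun B _ => by ring

theorem pairExpect_sum {ι : Type*} (θ : ℝ) (s : Finset ι) (f : ι → Finset α → Finset β → ℝ) :
    pairExpect θ (fun A B => ∑ i ∈ s, f i A B) = ∑ i ∈ s, pairExpect θ (f i) := by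
  simp only [pairExpect, Finset.mul_sum]
  rw [Finset.sum_comm (s := s)]
  exact Finset.sum_congr rfl fun A _ => Finset.sum_comm

theorem prPairRandomSubset_eq_pairExpect (θ : ℝ) (E : Finset α → Finset β → Prop)
    [∀ A B, Decidable (E A B)] :
    prPairRandomSubset θ E = pairExpect θ (fun A B => if E A B then 1 else 0) := by
  rw [prPairRandomSubset, pairExpect]
  simp only [Finset.powerset_univ]
  have ha : Fintype.ofFinite α = ‹Fintype α› := Subsingleton.elim _ _
  have hb : Fintype.ofFinite β = ‹Fintype β› := Subsingleton.elim _ _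
  rw [ha, hb]
  refine Finset.sum_congr rfl fun A _ => Finset.sum_congr rfl fun B _ => ?_
  split_ifs
  · rw [subsetWeight, subsetWeight, pow_add, pow_add]; ring
  · simp

theorem prPairRandomSubset_le_one {α β : Type*} [Finite α] [Finite β] {θ : ℝ} (h0 : 0 ≤ θ)
    (h1 : θ ≤ 1) (E : Finset α → Finset β → Prop) : prPairRandomSubset θ E ≤ 1 := by
  classical
  have := Fintype.ofFinite α
  have := Fintype.ofFinite β
  rw [prPairRandomSubset_eq_pairExpect]
  exact (pairExpect_mono h0 h1 fun A B => by split_ifs <;> norm_num).trans_eq (pairExpect_one θ)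

theorem prPairRandomSubset_nonneg {α β : Type*} [Finite α] [Finite β] {θ : ℝ} (h0 : 0 ≤ θ)
    (h1 : θ ≤ 1) (E : Finset α → Finset β → Prop) : 0 ≤ prPairRandomSubset θ E := by
  classical
  have := Fintype.ofFinite α
  have := Fintype.ofFinite β
  rw [prPairRandomSubset_eq_pairExpect]
  have := pairExpect_mono h0 h1 (f := fun A B => 0) (g := fun A B => if E A B then 1 else 0)
    fun A B => by split_ifs <;> norm_num
  simpa [pairExpect] using this

/-- Union bound over the points. -/
theorem prPairRandomSubset_exists_le_card {θ : ℝ} (h0 : 0 ≤ θ) (h1 : θ ≤ 1)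
    (R : α → β → Prop) :
    prPairRandomSubset θ (fun A B => ∃ x ∈ A, ∃ y ∈ B, R x y) ≤ Fintype.card α * θ := by
  classical
  rw [prPairRandomSubset_eq_pairExpect]
  have h : ∑ x : α, pairExpect θ (fun (A : Finset α) (B : Finset β) =>
      (if {x} ⊆ A then 1 else 0) * (if (∅ : Finset β) ⊆ B then 1 else 0)) =
      Fintype.card α * θ := by
    simp only [pairExpect_subset]
    simp
  rw [← h, ← pairExpect_sum]
  refine pairExpect_mono h0 h1 fun A B => ?_
  by_cases hE : ∃ x ∈ A, ∃ y ∈ B, R x y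
  · rw [if_pos hE]
    obtain ⟨x, hx, -⟩ := hE
    refine le_trans ?_ (Finset.single_le_sum (fun y _ => ?_) (Finset.mem_univ x))
    · simp [hx]
    · positivity
  · rw [if_neg hE]
    exact Finset.sum_nonneg fun y _ => by positivity

open Classical in
/-- Union bound over the incident pairs. -/
theorem prPairRandomSubset_exists_le_card_filter {θ : ℝ} (h0 : 0 ≤ θ) (h1 : θ ≤ 1)
    (R : α → β → Prop) :
    prPairRandomSubset θ (fun A B => ∃ x ∈ A, ∃ y ∈ B, R x y) ≤
      (Finset.univ.filter fun p : α × β => R p.1 p.2).card * θ ^ 2 := by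
  rw [prPairRandomSubset_eq_pairExpect]
  have h : ∑ p ∈ Finset.univ.filter fun p : α × β => R p.1 p.2,
      pairExpect θ (fun (A : Finset α) (B : Finset β) =>
      (if {p.1} ⊆ A then 1 else 0) * (if {p.2} ⊆ B then 1 else 0)) =
      (Finset.univ.filter fun p : α × β => R p.1 p.2).card * θ ^ 2 := by
    simp only [pairExpect_subset]
    simp [sq]
  rw [← h, ← pairExpect_sum]
  refine pairExpect_mono h0 h1 fun A B => ?_
  by_cases hE : ∃ x ∈ A, ∃ y ∈ B, R x y
  · rw [if_pos hE]
    obtain ⟨x, hx, y, hy, hR⟩ := hE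
    refine le_trans ?_ (Finset.single_le_sum (fun y _ => ?_)
      (Finset.mem_filter.2 ⟨Finset.mem_univ (x, y), hR⟩))
    · simp [hx, hy]
    · positivity
  · rw [if_neg hE]
    exact Finset.sum_nonneg fun y _ => by positivity

open Classical in
/-- Chebyshev's inequality for the number of incident pairs in a biregular incidence structure. -/
theorem sq_mul_one_sub_prPairRandomSubset_le {θ : ℝ} (h0 : 0 ≤ θ) (h1 : θ ≤ 1)
    (R : α → β → Prop) {d e : ℕ} (hd : ∀ x, (Finset.univ.filter fun y => R x y).card = d)
    (he : ∀ y, (Finset.univ.filter fun x => R x y).card = e) {N : ℕ}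
    (hN : (Finset.univ.filter fun p : α × β => R p.1 p.2).card = N) :
    (N * θ ^ 2) ^ 2 * (1 - prPairRandomSubset θ (fun A B => ∃ x ∈ A, ∃ y ∈ B, R x y)) ≤
      N * (d + e) * θ ^ 3 + N * θ ^ 2 := by
  set I := Finset.univ.filter fun p : α × β => R p.1 p.2 with hI
  set μ : ℝ := N * θ ^ 2 with hμ
  let Z : Finset α → Finset β → ℝ := fun A B =>
    ∑ p ∈ I, (if {p.1} ⊆ A then 1 else 0) * (if {p.2} ⊆ B then 1 else 0)
  have hZ : pairExpect θ Z = μ := by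
    simp only [Z, pairExpect_sum, pairExpect_subset]
    simp [sq, hN, hμ]
  have hZZ : pairExpect θ (fun A B => Z A B * Z A B) =
      ∑ p ∈ I, ∑ p' ∈ I,
        θ ^ ({p.1, p'.1} : Finset α).card * θ ^ ({p.2, p'.2} : Finset β).card := by
    simp only [← pairExpect_subset, ← pairExpect_sum]
    congr 1
    funext A B
    simp only [Z, Finset.sum_mul_sum]
    refine Finset.sum_congr rfl fun p _ => Finset.sum_congr rfl fun p' _ => ?_
    simp only [Finset.insert_subset_iff, Finset.singleton_subset_iff]
    by_cases h₁ : p.1 ∈ A <;> by_cases h₂ : p'.1 ∈ A <;> by_cases h₃ : p.2 ∈ B <;>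
      by_cases h₄ : p'.2 ∈ B <;> simp [h₁, h₂, h₃, h₄]
  have hfst : ∀ p ∈ I, (I.filter fun p' => p'.1 = p.1).card = d := fun p _ => by
    rw [← hd p.1]
    refine Finset.card_bij' (fun p' _ => p'.2) (fun y _ => (p.1, y)) ?_ ?_ ?_ ?_
    · simp only [hI, Finset.mem_filter, Finset.mem_univ, true_and]
      rintro p' ⟨h, h'⟩
      exact h' ▸ h
    · simp [hI]
    · simp only [hI, Finset.mem_filter, Finset.mem_univ, true_and]
      rintro p' ⟨h, h'⟩
      exact Prod.ext h'.symm rfl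
    · simp
  have hsnd : ∀ p ∈ I, (I.filter fun p' => p'.2 = p.2).card = e := fun p _ => by
    rw [← he p.2]
    refine Finset.card_bij' (fun p' _ => p'.1) (fun y _ => (y, p.2)) ?_ ?_ ?_ ?_
    · simp only [hI, Finset.mem_filter, Finset.mem_univ, true_and]
      rintro p' ⟨h, h'⟩
      exact h' ▸ h
    · simp [hI]
    · simp only [hI, Finset.mem_filter, Finset.mem_univ, true_and]
      rintro p' ⟨h, h'⟩
      exact Prod.ext rfl h'.symm
    · simp
  have hZZ' : pairExpect θ (fun A B => Z A B * Z A B) ≤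
      N * (N * θ ^ 4 + d * θ ^ 3 + e * θ ^ 3 + θ ^ 2) := by
    rw [hZZ]
    calc _ ≤ ∑ p ∈ I, ∑ p' ∈ I,
          (θ ^ 4 + (if p'.1 = p.1 then θ ^ 3 else 0) + (if p'.2 = p.2 then θ ^ 3 else 0) +
            (if p' = p then θ ^ 2 else 0)) :=
          Finset.sum_le_sum fun p _ => Finset.sum_le_sum fun p' _ => pow_card_pair_le h0 p p'
      _ = ∑ p ∈ I, (N * θ ^ 4 + d * θ ^ 3 + e * θ ^ 3 + θ ^ 2) := by
          refine Finset.sum_congr rfl fun p hp => ?_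
          rw [Finset.sum_add_distrib, Finset.sum_add_distrib, Finset.sum_add_distrib,
            Finset.sum_ite_eq', if_pos hp, ← Finset.sum_filter, ← Finset.sum_filter,
            Finset.sum_const, Finset.sum_const, Finset.sum_const, hfst p hp, hsnd p hp, hN]
          simp
      _ = _ := by rw [Finset.sum_const, hN, nsmul_eq_mul]
  have hpr : pairExpect θ (fun A B => if (∃ x ∈ A, ∃ y ∈ B, R x y) then (1 : ℝ) else 0) =
      prPairRandomSubset θ (fun A B => ∃ x ∈ A, ∃ y ∈ B, R x y) :=
    (prPairRandomSubset_eq_pairExpect θ fun A B => ∃ x ∈ A, ∃ y ∈ B, R x y).symm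
  have hmono := pairExpect_mono h0 h1
    (f := fun A B => μ ^ 2 * 1 +
      (-μ ^ 2) * (if (∃ x ∈ A, ∃ y ∈ B, R x y) then (1 : ℝ) else 0))
    (g := fun A B => Z A B * Z A B + ((-2 * μ) * Z A B + μ ^ 2 * 1)) (fun A B => by
      split_ifs with hE
      · nlinarith [sq_nonneg (Z A B - μ)]
      · have : Z A B = 0 := Finset.sum_eq_zero fun p hp => by
          by_cases hA : p.1 ∈ A
          · have hB : p.2 ∉ B := fun hB => hE ⟨p.1, hA, p.2, hB, (Finset.mem_filter.1 hp).2⟩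
            simp [hB]
          · simp [hA]
        simp [this])
  rw [pairExpect_add, pairExpect_add, pairExpect_add, pairExpect_const_mul, pairExpect_const_mul,
    pairExpect_const_mul, pairExpect_one, hZ, hpr] at hmono
  have : μ ^ 2 = N * (N * θ ^ 4) := by rw [hμ]; ring
  nlinarith

open Classical in
theorem card_filter_eq_card_mul_left (R : α → β → Prop) {d : ℕ}
    (hd : ∀ x, (Finset.univ.filter fun y => R x y).card = d) :
    (Finset.univ.filter fun p : α × β => R p.1 p.2).card = Fintype.card α * d := by
  simp only [Finset.card_filter] at hd ⊢
  rw [Fintype.sum_prod_type]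
  simp only [hd, Finset.sum_const, Finset.card_univ, smul_eq_mul]

open Classical in
theorem card_filter_eq_card_mul_right (R : α → β → Prop) {e : ℕ}
    (he : ∀ y, (Finset.univ.filter fun x => R x y).card = e) :
    (Finset.univ.filter fun p : α × β => R p.1 p.2).card = Fintype.card β * e := by
  simp only [Finset.card_filter] at he ⊢
  rw [Fintype.sum_prod_type_right]
  simp only [he, Finset.sum_const, Finset.card_univ, smul_eq_mul]

open Classical in
theorem one_sub_prPairRandomSubset_le {θ t : ℝ} (h0 : 0 < θ) (h1 : θ ≤ 1) (ht : 0 < t)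
    (R : α → β → Prop) {d e : ℕ} (hd : ∀ x, (Finset.univ.filter fun y => R x y).card = d)
    (he : ∀ y, (Finset.univ.filter fun x => R x y).card = e)
    (hα : 1 ≤ Fintype.card α * t) (hβ : 1 ≤ Fintype.card β * t)
    (hN : 1 ≤ (Fintype.card α * d : ℝ) * t ^ 2) :
    1 - prPairRandomSubset θ (fun A B => ∃ x ∈ A, ∃ y ∈ B, R x y) ≤
      (t / θ) ^ 2 + 2 * (t / θ) := by
  obtain ⟨N, hNdef⟩ : ∃ N, (Finset.univ.filter fun p : α × β => R p.1 p.2).card = N := ⟨_, rfl⟩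
  have hNd : (N : ℝ) = Fintype.card α * d := by
    rw [← hNdef, card_filter_eq_card_mul_left R hd]; push_cast; ring
  have hNe : (N : ℝ) = Fintype.card β * e := by
    rw [← hNdef, card_filter_eq_card_mul_right R he]; push_cast; ring
  rw [← hNd] at hN
  have hNpos : 0 < (N : ℝ) := by
    by_contra! h
    nlinarith [mul_nonneg (neg_nonneg.2 h) (sq_nonneg t)]
  have key := sq_mul_one_sub_prPairRandomSubset_le h0.le h1 R hd he hNdef
  refine le_of_mul_le_mul_left (key.trans ?_) (show 0 < (N * θ ^ 2) ^ 2 by positivity)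
  have hd' : (d : ℝ) ≤ N * t := by
    have := mul_le_mul_of_nonneg_left hα (Nat.cast_nonneg (α := ℝ) d)
    rw [hNd]; linarith
  have he' : (e : ℝ) ≤ N * t := by
    have := mul_le_mul_of_nonneg_left hβ (Nat.cast_nonneg (α := ℝ) e)
    rw [hNe]; linarith
  calc (N : ℝ) * (d + e) * θ ^ 3 + N * θ ^ 2
      ≤ N * (N * t + N * t) * θ ^ 3 + N * θ ^ 2 * (N * t ^ 2) := by
        refine add_le_add ?_ (le_mul_of_one_le_right (by positivity) hN)
        gcongr
    _ = _ := by field_simp; ring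

end pairExpect

section Subspaces

variable {K V : Type*} [Field K] [Fintype K] [AddCommGroup V] [Module K V] [Finite V]

theorem pow_le_card_submodule_finrank_eq {n m : ℕ} (hn : Module.finrank K V = n) (hmn : m ≤ n) :
    Fintype.card K ^ (m * (n - m)) ≤ Nat.card {W : Submodule K V // Module.finrank K W = m} := by
  have hV : Module.finrank K ((Fin m → K) × (Fin (n - m) → K)) = Module.finrank K V := by
    simp [hn, hmn]
  let φ := LinearEquiv.ofFinrankEq _ _ hV
  let g : ((Fin m → K) →ₗ[K] (Fin (n - m) → K)) →
      {W : Submodule K V // Module.finrank K W = m} := fun f =>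
    ⟨f.graph.map φ.toLinearMap, by
      rw [LinearEquiv.finrank_map_eq, LinearMap.graph_eq_range_prod,
        LinearMap.finrank_range_of_inj]
      · simp
      · intro x y h
        exact (Prod.ext_iff.1 h).1⟩
  have hg : Function.Injective g := by
    intro f f' h
    have h2 : f.graph = f'.graph :=
      Submodule.map_injective_of_injective φ.injective (Subtype.ext_iff.1 h)
    refine LinearMap.ext fun x => ?_
    have : (x, f x) ∈ f'.graph := h2 ▸ ((f.mem_graph_iff _).2 rfl)
    exact (f'.mem_graph_iff _).1 this
  have := Nat.card_le_card_of_injective g hg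
  rwa [Module.natCard_eq_pow_finrank (K := K), Module.finrank_linearMap, Module.finrank_fin_fun,
    Module.finrank_fin_fun, Nat.card_eq_fintype_card] at this

theorem card_submodule_finrank_eq_one_le {n : ℕ} (hn : Module.finrank K V = n) (h1 : 1 ≤ n) :
    Nat.card {W : Submodule K V // Module.finrank K W = 1} ≤ 2 * Fintype.card K ^ (n - 1) := by
  rw [← Nat.card_congr (Projectivization.equivSubmodule K V)]
  have h := Projectivization.card' K V
  rw [Module.natCard_eq_pow_finrank (K := K), hn, Nat.card_eq_fintype_card] at h
  have hq : 2 ≤ Fintype.card K := Fintype.one_lt_card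
  obtain ⟨k, rfl⟩ := Nat.exists_eq_add_of_le h1
  obtain ⟨r, hr⟩ := Nat.exists_eq_add_of_le hq
  rw [hr] at h ⊢
  rw [Nat.add_sub_cancel_left, pow_add, pow_one] at *
  rw [show 2 + r - 1 = r + 1 by omega] at h
  by_contra! hlt
  have := Nat.mul_le_mul_right (r + 1) hlt.le
  nlinarith [Nat.zero_le (r * (2 + r) ^ k)]

theorem card_submodule_finrank_eq_pred_le {n : ℕ} (hn : Module.finrank K V = n) (h1 : 1 ≤ n) :
    Nat.card {W : Submodule K V // Module.finrank K W = n - 1} ≤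
      2 * Fintype.card K ^ (n - 1) := by
  have : Finite (Module.Dual K V) := Module.finite_of_finite K
  refine le_trans ?_ (card_submodule_finrank_eq_one_le (K := K) (V := Module.Dual K V)
    (Subspace.dual_finrank_eq.trans hn) h1)
  refine Nat.card_le_card_of_injective (fun W => ⟨W.1.dualAnnihilator, ?_⟩) ?_
  · have := Subspace.finrank_add_finrank_dualAnnihilator_eq W.1
    rw [W.2, hn] at this
    omega
  · intro W W' h
    exact Subtype.ext (Subspace.dualAnnihilator_inj.1 (Subtype.ext_iff.1 h))

/-- The `m`-flats through a point correspond to the `m`-dimensional subspaces. -/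
noncomputable def flatsThroughEquiv (K : Type*) {V : Type*} [Field K] [AddCommGroup V]
    [Module K V] (m : ℕ) (x : V) : {W : Submodule K V // Module.finrank K W = m} ≃
      {S : {S : Set V // IsFlat K m S} // x ∈ S.1} :=
  Equiv.ofBijective
    (fun W => ⟨⟨(x + ·) '' (W.1 : Set V), W.1, W.2, x, rfl⟩, 0, W.1.zero_mem, add_zero x⟩) <| by
    constructor
    · intro W W' h
      have h' : (x + ·) '' (W.1 : Set V) = (x + ·) '' (W'.1 : Set V) :=
        Subtype.ext_iff.1 (Subtype.ext_iff.1 h)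
      exact Subtype.ext (SetLike.coe_injective ((add_right_injective x).image_injective h'))
    · rintro ⟨⟨S, W, hW, v, rfl⟩, w, hw, hx⟩
      refine ⟨⟨W, hW⟩, Subtype.ext (Subtype.ext ?_)⟩
      subst hx
      ext z
      constructor
      · rintro ⟨u, hu, rfl⟩
        exact ⟨w + u, W.add_mem hw hu, (add_assoc v w u).symm⟩
      · rintro ⟨u, hu, rfl⟩
        exact ⟨u - w, W.sub_mem hu hw, by simp [add_assoc]⟩

theorem IsFlat.natCard_eq {m : ℕ} {S : Set V} (hS : IsFlat K m S) :
    Nat.card S = Fintype.card K ^ m := by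
  obtain ⟨W, rfl, v, rfl⟩ := hS
  rw [Nat.card_image_of_injective (add_right_injective v)]
  exact (Module.natCard_eq_pow_finrank (K := K) (V := W)).trans (by rw [Nat.card_eq_fintype_card])

end Subspaces

section Flats

variable {K : Type*} [Field K] [Fintype K]

theorem prPairRandomSubset_flat_le_card_mul (n m : ℕ) {θ : ℝ} (h0 : 0 ≤ θ) (h1 : θ ≤ 1) :
    prPairRandomSubset (α := Fin n → K) (β := {S : Set (Fin n → K) // IsFlat K m S}) θ
      (fun A B => ∃ x ∈ A, ∃ S ∈ B, x ∈ S.1) ≤ (Fintype.card K : ℝ) ^ n * θ := by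
  classical
  have := Fintype.ofFinite {S : Set (Fin n → K) // IsFlat K m S}
  refine (prPairRandomSubset_exists_le_card h0 h1 _).trans_eq ?_
  simp

open Classical in
theorem card_filter_mem_flat {K : Type*} [Field K] {n m : ℕ}
    [Fintype {S : Set (Fin n → K) // IsFlat K m S}]
    (x : Fin n → K) :
    (Finset.univ.filter fun S : {S : Set (Fin n → K) // IsFlat K m S} => x ∈ S.1).card =
      Nat.card {W : Submodule K (Fin n → K) // Module.finrank K W = m} := by
  rw [Nat.card_congr (flatsThroughEquiv K m x), Nat.card_eq_fintype_card, Fintype.card_subtype]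

open Classical in
theorem IsFlat.card_filter_mem {n m : ℕ} {S : Set (Fin n → K)} (hS : IsFlat K m S) :
    (Finset.univ.filter fun x => x ∈ S).card = Fintype.card K ^ m := by
  rw [← hS.natCard_eq, Nat.card_eq_fintype_card, ← Fintype.card_subtype]

theorem prPairRandomSubset_flat_le {n m : ℕ} (hn : 1 ≤ n) (hm : m = 1 ∨ m = n - 1) {θ : ℝ}
    (h0 : 0 ≤ θ) (h1 : θ ≤ 1) :
    prPairRandomSubset (α := Fin n → K) (β := {S : Set (Fin n → K) // IsFlat K m S}) θ
      (fun A B => ∃ x ∈ A, ∃ S ∈ B, x ∈ S.1) ≤ 2 * (Fintype.card K : ℝ) ^ (2 * n - 1) * θ ^ 2 := by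
  classical
  have := Fintype.ofFinite {S : Set (Fin n → K) // IsFlat K m S}
  refine (prPairRandomSubset_exists_le_card_filter h0 h1 _).trans ?_
  refine mul_le_mul_of_nonneg_right ?_ (sq_nonneg θ)
  rw [card_filter_eq_card_mul_left _ card_filter_mem_flat]
  have hD : Nat.card {W : Submodule K (Fin n → K) // Module.finrank K W = m} ≤
      2 * Fintype.card K ^ (n - 1) := by
    rcases hm with rfl | rfl
    · exact card_submodule_finrank_eq_one_le (by simp) hn
    · exact card_submodule_finrank_eq_pred_le (by simp) hn
  have h := Nat.mul_le_mul_left (Fintype.card (Fin n → K)) hD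
  have hpow : Fintype.card (Fin n → K) * (2 * Fintype.card K ^ (n - 1)) =
      2 * Fintype.card K ^ (2 * n - 1) := by
    rw [show 2 * n - 1 = n + (n - 1) by omega, pow_add]
    simp
    ring
  rw [hpow] at h
  exact_mod_cast h

theorem one_sub_prPairRandomSubset_flat_le {n m : ℕ} (hmn : m < n) {θ t : ℝ}
    (h0 : 0 < θ) (h1 : θ ≤ 1) (ht : 0 < t) (hn : 1 ≤ (Fintype.card K : ℝ) ^ n * t)
    (hN : 1 ≤ (Fintype.card K : ℝ) ^ (n + m * (n - m)) * t ^ 2) :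
    1 - prPairRandomSubset (α := Fin n → K) (β := {S : Set (Fin n → K) // IsFlat K m S}) θ
      (fun A B => ∃ x ∈ A, ∃ S ∈ B, x ∈ S.1) ≤ (t / θ) ^ 2 + 2 * (t / θ) := by
  classical
  have := Fintype.ofFinite {S : Set (Fin n → K) // IsFlat K m S}
  have hD := pow_le_card_submodule_finrank_eq (K := K) (V := Fin n → K) (n := n) (m := m)
    (by simp) hmn.le
  have hα : Fintype.card (Fin n → K) = Fintype.card K ^ n := by simp
  have hβ : Fintype.card K ^ n ≤ Fintype.card {S : Set (Fin n → K) // IsFlat K m S} := by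
    have h := (card_filter_eq_card_mul_left
      (fun (x : Fin n → K) (S : {S : Set (Fin n → K) // IsFlat K m S}) => x ∈ S.1)
      card_filter_mem_flat).symm.trans
        (card_filter_eq_card_mul_right
          (fun (x : Fin n → K) (S : {S : Set (Fin n → K) // IsFlat K m S}) => x ∈ S.1)
          fun S => S.2.card_filter_mem)
    have hq : 0 < Fintype.card K := Fintype.card_pos
    refine Nat.le_of_mul_le_mul_right (h.symm ▸ ?_) (pow_pos hq m)
    rw [hα]
    refine Nat.mul_le_mul_left _ (le_trans (Nat.pow_le_pow_right hq ?_) hD)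
    exact Nat.le_mul_of_pos_right m (by omega)
  refine one_sub_prPairRandomSubset_le h0 h1 ht _ card_filter_mem_flat
    (fun S => S.2.card_filter_mem) ?_ ?_ ?_
  · rw [hα]; exact_mod_cast hn
  · refine hn.trans (mul_le_mul_of_nonneg_right ?_ ht.le)
    exact_mod_cast hβ
  · refine hN.trans (mul_le_mul_of_nonneg_right ?_ (sq_nonneg t))
    rw [hα, pow_add]
    push_cast
    refine mul_le_mul_of_nonneg_left ?_ (by positivity)
    exact_mod_cast hD

end Flats

theorem tendsto_one_of_one_sub_le {p t θ : ℕ → ℝ} (ht : ∀ i, 0 < t i) (hθ : ∀ i, 0 ≤ θ i)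
    (hp1 : ∀ i, p i ≤ 1) (hp : ∀ i, 0 < θ i → 1 - p i ≤ (t i / θ i) ^ 2 + 2 * (t i / θ i))
    (h : t =o[atTop] θ) : Tendsto p atTop (nhds 1) := by
  have hr := h.tendsto_div_nhds_zero
  have hlim : Tendsto (fun i => 1 - ((t i / θ i) ^ 2 + 2 * (t i / θ i))) atTop (nhds 1) := by
    simpa using ((hr.pow 2).add (hr.const_mul 2)).const_sub 1
  refine tendsto_of_tendsto_of_tendsto_of_le_of_le' hlim tendsto_const_nhds ?_
    (Eventually.of_forall hp1)
  filter_upwards [h.def one_pos] with i hi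
  have : 0 < θ i := by
    refine (hθ i).lt_of_ne fun h0 => ?_
    rw [← h0] at hi
    simp at hi
    exact (ht i).ne' hi
  linarith [hp i this]

theorem stmt10 (n m q : ℕ → ℕ) (F : ℕ → Type) [∀ i, Field (F i)] [∀ i, Fintype (F i)]
    (hm : ∀ i, 1 ≤ m i ∧ m i < n i)
    (hq : ∀ i, Fintype.card (F i) = q i) (hqpp : ∀ i, IsPrimePow (q i))
    (hnq : Tendsto (fun i => n i + q i) atTop atTop)
    (θ : ℕ → ℝ) (hθ : ∀ i, 0 ≤ θ i ∧ θ i ≤ 1) :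
    ((∀ i, m i = 1 ∨ m i = n i - 1) →
      (θ =o[atTop] (fun i => (q i : ℝ) ^
          (-((((n i - m i) * (m i + 1) + m i : ℕ) : ℝ)) / 2)) →
        Tendsto (fun i => prPairRandomSubset (β := {S : Set (Fin (n i) → F i) // IsFlat (F i) (m i) S}) (θ i)
          (fun A B => ∃ x ∈ A, ∃ S ∈ B, x ∈ (S : {S : Set (Fin (n i) → F i) // IsFlat (F i) (m i) S}).val))
          atTop (nhds 0)) ∧
      ((fun i => (q i : ℝ) ^ (-((((n i - m i) * (m i + 1) + m i : ℕ) : ℝ)) / 2)) =o[atTop] θ →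
        Tendsto (fun i => prPairRandomSubset (β := {S : Set (Fin (n i) → F i) // IsFlat (F i) (m i) S}) (θ i)
          (fun A B => ∃ x ∈ A, ∃ S ∈ B, x ∈ (S : {S : Set (Fin (n i) → F i) // IsFlat (F i) (m i) S}).val))
          atTop (nhds 1))) ∧
    ((∀ i, m i ≠ 1 ∧ m i ≠ n i - 1) →
      (θ =o[atTop] (fun i => (q i : ℝ) ^ (-(n i : ℝ))) →
        Tendsto (fun i => prPairRandomSubset (β := {S : Set (Fin (n i) → F i) // IsFlat (F i) (m i) S}) (θ i)
          (fun A B => ∃ x ∈ A, ∃ S ∈ B, x ∈ (S : {S : Set (Fin (n i) → F i) // IsFlat (F i) (m i) S}).val))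
          atTop (nhds 0)) ∧
      ((fun i => (q i : ℝ) ^ (-(n i : ℝ))) =o[atTop] θ →
        Tendsto (fun i => prPairRandomSubset (β := {S : Set (Fin (n i) → F i) // IsFlat (F i) (m i) S}) (θ i)
          (fun A B => ∃ x ∈ A, ∃ S ∈ B, x ∈ (S : {S : Set (Fin (n i) → F i) // IsFlat (F i) (m i) S}).val))
          atTop (nhds 1))) := by
  have hq1 : ∀ i, (1 : ℝ) ≤ q i := fun i => by exact_mod_cast (hqpp i).one_lt.le
  have hq0 : ∀ i, (0 : ℝ) < q i := fun i => one_pos.trans_le (hq1 i)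
  refine ⟨fun hcase => ?_, fun hcase => ?_⟩
  · have hT : ∀ i, (n i - m i) * (m i + 1) + m i = 2 * n i - 1 := fun i => by
      obtain ⟨h1, h2⟩ := hm i
      rcases hcase i with h | h
      · rw [h] at h2 ⊢; omega
      · rw [h, show n i - (n i - 1) = 1 by omega]; omega
    have hT' : ∀ i, n i + m i * (n i - m i) = 2 * n i - 1 := fun i => by
      obtain ⟨h1, h2⟩ := hm i
      rcases hcase i with h | h
      · rw [h] at h2 ⊢; omega
      · rw [h, show n i - (n i - 1) = 1 by omega]; omega
    simp only [hT]
    set t : ℕ → ℝ := fun i => (q i : ℝ) ^ (-((2 * n i - 1 : ℕ) : ℝ) / 2) with ht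
    have htpos : ∀ i, 0 < t i := fun i => Real.rpow_pos_of_pos (hq0 i) _
    have htsq : ∀ i, (q i : ℝ) ^ (2 * n i - 1) * t i ^ 2 = 1 := fun i => by
      rw [ht, ← Real.rpow_natCast, ← Real.rpow_natCast, ← Real.rpow_mul (hq0 i).le,
        ← Real.rpow_add (hq0 i)]
      rw [show ((2 * n i - 1 : ℕ) : ℝ) + -((2 * n i - 1 : ℕ) : ℝ) / 2 * ((2 : ℕ) : ℝ) = 0 by
        push_cast; ring, Real.rpow_zero]
    refine ⟨fun h => ?_, fun h => ?_⟩
    · have hlim := (h.tendsto_div_nhds_zero.pow 2).const_mul 2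
      rw [zero_pow two_ne_zero, mul_zero] at hlim
      refine squeeze_zero (fun i => prPairRandomSubset_nonneg (hθ i).1 (hθ i).2 _) (fun i => ?_)
        hlim
      refine (prPairRandomSubset_flat_le (Nat.one_le_of_lt (hm i).2) (hcase i)
        (hθ i).1 (hθ i).2).trans_eq ?_
      rw [hq i, div_pow, ← mul_div_assoc, eq_div_iff (pow_pos (htpos i) 2).ne']
      linear_combination 2 * θ i ^ 2 * htsq i
    · refine tendsto_one_of_one_sub_le htpos (fun i => (hθ i).1)
        (fun i => prPairRandomSubset_le_one (hθ i).1 (hθ i).2 _) (fun i hpos => ?_) h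
      refine one_sub_prPairRandomSubset_flat_le (hm i).2 hpos (hθ i).2 (htpos i) ?_ ?_
      · rw [hq i, ht, ← Real.rpow_natCast, ← Real.rpow_add (hq0 i)]
        refine Real.one_le_rpow (hq1 i) ?_
        have : ((2 * n i - 1 : ℕ) : ℝ) ≤ 2 * n i := by exact_mod_cast Nat.sub_le _ _
        linarith
      · rw [hT' i, hq i, htsq i]
  · set t : ℕ → ℝ := fun i => (q i : ℝ) ^ (-(n i : ℝ)) with ht
    have htpos : ∀ i, 0 < t i := fun i => Real.rpow_pos_of_pos (hq0 i) _
    have htn : ∀ i, (q i : ℝ) ^ n i * t i = 1 := fun i => by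
      rw [ht, ← Real.rpow_natCast, ← Real.rpow_add (hq0 i), add_neg_cancel, Real.rpow_zero]
    refine ⟨fun h => ?_, fun h => ?_⟩
    · refine squeeze_zero (fun i => prPairRandomSubset_nonneg (hθ i).1 (hθ i).2 _) (fun i => ?_)
        h.tendsto_div_nhds_zero
      refine (prPairRandomSubset_flat_le_card_mul _ _ (hθ i).1 (hθ i).2).trans_eq ?_
      rw [hq i, eq_div_iff (htpos i).ne']
      linear_combination θ i * htn i
    · refine tendsto_one_of_one_sub_le htpos (fun i => (hθ i).1)
        (fun i => prPairRandomSubset_le_one (hθ i).1 (hθ i).2 _) (fun i hpos => ?_) h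
      refine one_sub_prPairRandomSubset_flat_le (hm i).2 hpos (hθ i).2 (htpos i) ?_ ?_
      · rw [hq i, htn i]
      · have hexp : 2 * n i ≤ n i + m i * (n i - m i) := by
          obtain ⟨h1, h2⟩ := hm i
          obtain ⟨h3, h4⟩ := hcase i
          obtain ⟨a, ha⟩ := Nat.exists_eq_add_of_le (show 2 ≤ m i by omega)
          obtain ⟨b, hb⟩ := Nat.exists_eq_add_of_le (show m i + 2 ≤ n i by omega)
          rw [show n i - m i = 2 + b by omega, hb, ha]
          nlinarith [Nat.zero_le (a * b)]
        calc (1 : ℝ) = (q i : ℝ) ^ (2 * n i) * t i ^ 2 := by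
              rw [mul_comm 2, pow_mul, ← mul_pow, htn i, one_pow]
          _ ≤ _ := by
              rw [hq i]
              exact mul_le_mul_of_nonneg_right (pow_le_pow_right₀ (hq1 i) hexp) (sq_nonneg _)
end
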